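/- arXiv:2508.03867 — 2 statements merged into one kernel-verified Lean document; each statement's English description precedes it below -/
import Mathlib

section
/- Let A_1 and A_2 be activation patterns such that every A_1-active path and every A_2-active path have empty intersection (i.e., for every A_1-active path p and A_2-active path q, p_ℓ ≠ q_ℓ for all ℓ ∈ [L−1]). Let r_i = min_{1 ≤ ℓ ≤ L−1} Σ_j (A_i)^ℓ_j for i = 1, 2. Then the vanishing ideal in ℂ[z^{(1)}_{ab}, z^{(2)}_{ab} : a ∈ [n_L], b ∈ [n_0]] of the set {(M_{A_1}(θ), M_{A_2}(θ)) : θ real} equals the sum of the ideal generated by all (r_1+1)×(r_1+1) minors of the generic matrix Z_1 = (z^{(1)}_{ab}) and the ideal generated by all (r_2+1)×(r_2+1) minors of the generic matrix Z_2 = (z^{(2)}_{ab}). -/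
/-!
The statement reduces to the second fundamental theorem of invariant theory for `GL_r`, in a version
for several generic matrices at once.

*Network side.* Each `M_A(θ)` factors through `diag(A^ℓ)` for every hidden layer `ℓ`, so its rank is
at most `r`, the smallest number of active neurons, and all `(r+1)`-minors vanish on the image
(`maskedMatrix_minor_eq_zero`). Conversely, if `r₁, r₂ > 0`, every active unit lies on an active
path, so disjointness of paths makes the active sets of the two patterns disjoint in every hidden
layer (`disjoint_of_paths`). The two subnetworks can then be programmed independently, and every
pair `(U₁ V₁, U₂ V₂)` with inner dimensions `r₁, r₂` is attained (`exists_weights`). If some `rᵢ`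
is zero, the corresponding matrix is zero and there is nothing to separate.

*Algebraic side.* It remains to show that a polynomial vanishing at all real points `(U_t V_t)_t`
lies in the ideal of minors (`mem_minorIdeal`). This is a Gröbner basis argument, with the weight
`∑ (i+1)(j+1)` of a monomial `∏ z_{ij}` in the role of the term order. Call a monomial good if, for
every `t`, its `t`-part contains no antidiagonal chain
`(i_0 < ⋯ < i_r, j_0 > ⋯ > j_r)` of length `r_t + 1`.

* Good monomials span modulo the minors (`exists_good_repr`). A monomial that is not good is
  divisible by the antidiagonal term of an `(r_t+1)`-minor, and the rearrangement inequality says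
  that all other terms of this minor have strictly larger weight. The weight is bounded in each
  degree, so rewriting terminates.
* Good monomials have linearly independent images under `Z_t ↦ U_t V_t`
  (`eq_zero_of_prodMap_eq_zero`). Colour the variables of a good monomial by the length of the
  longest antidiagonal chain starting there: only `r_t` colours occur, and within a colour rows and
  columns are sorted alike. The colouring singles out a monomial `u^R v^C` in the image, where
  `R` and `C` record the rows and columns of each colour. Any other monomial whose image contains
  `u^R v^C` has the same rows and columns in each colour, but matched differently, hence has
  strictly smaller weight: for all `x, y` it has no more entries with row `≥ x` and column `≥ y`
  than the sorted matching (`corner_le_of_margin_eq`). So in a nonzero combination of good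
  monomials, the one of least weight contributes a coefficient that nothing cancels.
-/


noncomputable section

def maskMat (n : ℕ → ℕ) (A : (ℓ : ℕ) → Fin (n ℓ) → Bool) (ℓ : ℕ) :
    Matrix (Fin (n ℓ)) (Fin (n ℓ)) ℝ :=
  Matrix.diagonal (fun i => if A ℓ i then (1 : ℝ) else 0)

def preM (n : ℕ → ℕ) (A : (ℓ : ℕ) → Fin (n ℓ) → Bool)
    (W : (ℓ : ℕ) → Matrix (Fin (n (ℓ + 1))) (Fin (n ℓ)) ℝ) :
    (ℓ : ℕ) → Matrix (Fin (n ℓ)) (Fin (n 0)) ℝ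
  | 0 => 1
  | ℓ + 1 => maskMat n A (ℓ + 1) * (W ℓ * preM n A W ℓ)

/-- The masked matrix `M_A(θ)` of an `L`-layer ReLU network without biases. -/
def maskedMatrix (n : ℕ → ℕ) (A : (ℓ : ℕ) → Fin (n ℓ) → Bool)
    (W : (ℓ : ℕ) → Matrix (Fin (n (ℓ + 1))) (Fin (n ℓ)) ℝ) :
    (L : ℕ) → Matrix (Fin (n L)) (Fin (n 0)) ℝ
  | 0 => 1
  | L + 1 => W L * preM n A W L

/-- The number of active neurons `Σ_i A^ℓ_i` at layer `ℓ`. -/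
def activeCard (n : ℕ → ℕ) (A : (ℓ : ℕ) → Fin (n ℓ) → Bool) (ℓ : ℕ) : ℕ :=
  (Finset.univ.filter fun i : Fin (n ℓ) => A ℓ i = true).card

/-- A path `p = (p_1, …, p_{L-1})` through the hidden layers (`L = K + 1`). -/
abbrev NPath (n : ℕ → ℕ) (K : ℕ) : Type := ∀ ℓ : Fin K, Fin (n (ℓ.1 + 1))

/-- The path `p` is `A`-active. -/
def IsActivePath (n : ℕ → ℕ) (A : (ℓ : ℕ) → Fin (n ℓ) → Bool) {K : ℕ}
    (p : NPath n K) : Prop :=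
  ∀ ℓ : Fin K, A (ℓ.1 + 1) (p ℓ) = true

/-- The vanishing ideal, inside `ℂ[y_i : i ∈ σ]`, of a set of real points. -/
def vanishingIdeal {σ : Type*} (S : Set (σ → ℝ)) : Ideal (MvPolynomial σ ℂ) where
  carrier := {f | ∀ y ∈ S, MvPolynomial.eval (fun i => (y i : ℂ)) f = 0}
  add_mem' := by
    intro a b ha hb y hy
    simp [map_add, ha y hy, hb y hy]
  zero_mem' := by intro y hy; simp
  smul_mem' := by
    intro c f hf y hy
    simp [smul_eq_mul, map_mul, hf y hy]

open MvPolynomial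

/-! ### Monomials, colourings and weights -/

/-- Index `(t, i, j)` of the entry in row `i` and column `j` of the generic matrix `Z_t`. -/
abbrev Pos (T : Type) (m n : ℕ) : Type := T × Fin m × Fin n

/-- Pairs of a matrix index `t` and an inner index `k` of the product `U_t * V_t`, whose inner
dimension is `r t`. -/
abbrev Colour {T : Type} (r : T → ℕ) : Type := (t : T) × Fin (r t)

/-- Variables for the entries of the generic factors: `inl (⟨t, k⟩, i)` is the entry `(i, k)` of
`U_t`, and `inr (⟨t, k⟩, j)` is the entry `(k, j)` of `V_t`. -/
abbrev FactorVar {T : Type} (r : T → ℕ) (m n : ℕ) : Type :=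
  (Colour r × Fin m) ⊕ (Colour r × Fin n)

/-- The substitution `Z_t ↦ U_t * V_t` with generic factors of inner dimension `r t`. -/
def prodMap {T : Type} [Fintype T] [DecidableEq T] (r : T → ℕ) (m n : ℕ) :
    MvPolynomial (Pos T m n) ℂ →ₐ[ℂ] MvPolynomial (FactorVar r m n) ℂ :=
  aeval fun p => ∑ κ : Colour r with κ.1 = p.1, X (.inl (κ, p.2.1)) * X (.inr (κ, p.2.2))

/-- The variables of the monomial `z^s`, listed with multiplicity. -/
abbrev Cell {T : Type} {m n : ℕ} (s : Pos T m n →₀ ℕ) : Type := (p : Pos T m n) × Fin (s p)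

/-- The exponent of the monomial obtained from `z^s` by choosing, for every variable `z_{tij}`
with colour `⟨t, k⟩`, the summand `u_{tik} v_{tkj}` of its image. It records how often each row and
each column occurs in each colour. -/
def margin {T : Type} {r : T → ℕ} {m n : ℕ} [Fintype T] (s : Pos T m n →₀ ℕ)
    (c : Cell s → Colour r) : FactorVar r m n →₀ ℕ :=
  ∑ a, (Finsupp.single (.inl (c a, a.1.2.1)) 1 + Finsupp.single (.inr (c a, a.1.2.2)) 1)

/-- The number of variables `z_{tij}` of `z^s`, with multiplicity, such that `x ≤ i` and `y ≤ j`. -/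
def corner {T : Type} [Fintype T] [DecidableEq T] {m n : ℕ} (s : Pos T m n →₀ ℕ)
    (t : T) (x y : ℕ) : ℕ :=
  ∑ p, s p * (if p.1 = t ∧ x ≤ p.2.1 ∧ y ≤ p.2.2 then 1 else 0)

/-- The weight of `z^s`, in which `z_{tij}` has weight `(i + 1) * (j + 1)` for zero-based `i`, `j`;
the shift makes the weight of `z_{tij}` the number of pairs `(x, y)` with `x ≤ i` and `y ≤ j`. -/
def weight {T : Type} [Fintype T] {m n : ℕ} (s : Pos T m n →₀ ℕ) : ℕ :=
  ∑ p, s p * ((p.2.1 + 1) * (p.2.2 + 1))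

section
set_option linter.unusedSectionVars false
variable {T : Type} [Fintype T] [DecidableEq T] {m n : ℕ} {r : T → ℕ}

lemma cell_sum (s : Pos T m n →₀ ℕ) (φ : Pos T m n → ℕ) :
    ∑ a : Cell s, φ a.1 = ∑ p, s p * φ p := by
  rw [Fintype.sum_sigma]; simp

lemma prodMap_monomial (s : Pos T m n →₀ ℕ) :
    prodMap r m n (monomial s 1) =
      ∑ c ∈ Fintype.piFinset fun a : Cell s => {κ : Colour r | κ.1 = a.1.1},
        monomial (margin s c) (1 : ℂ) := by
  have h : ∀ c : Cell s → Colour r, monomial (margin s c) (1 : ℂ) =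
      ∏ a, (X (.inl (c a, a.1.2.1)) * X (.inr (c a, a.1.2.2))) := by
    intro c
    simp only [X, monomial_mul, mul_one, margin, monomial_sum_one]
  let F : Cell s → Colour r → MvPolynomial (FactorVar r m n) ℂ :=
    fun a κ => X (.inl (κ, a.1.2.1)) * X (.inr (κ, a.1.2.2))
  have hF := Finset.prod_univ_sum
    (fun a : Cell s => ({κ : Colour r | κ.1 = a.1.1} : Finset (Colour r))) F
  rw [Fintype.prod_sigma] at hF
  simp only [h]
  rw [prodMap, aeval_monomial, Finsupp.prod_fintype _ _ (by simp)]
  refine Eq.trans ?_ hF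
  simp [F]

lemma margin_pair {s : Pos T m n →₀ ℕ} (c : Cell s → Colour r) (φ : FactorVar r m n → ℕ) :
    Finsupp.linearCombination ℕ φ (margin s c) =
      ∑ a, (φ (.inl (c a, a.1.2.1)) + φ (.inr (c a, a.1.2.2))) := by
  simp [margin, map_sum]

lemma corner_eq (s : Pos T m n →₀ ℕ) (c : Cell s → Colour r) (hc : ∀ a, (c a).1 = a.1.1)
    (t : T) (x y : ℕ) :
    corner s t x y = ∑ k : Fin (r t),
      (Finset.univ.filter fun a : Cell s =>
        c a = ⟨t, k⟩ ∧ x ≤ (a.1.2.1 : ℕ) ∧ y ≤ (a.1.2.2 : ℕ)).card := by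
  rw [corner, ← cell_sum s fun p => if p.1 = t ∧ x ≤ (p.2.1 : ℕ) ∧ y ≤ (p.2.2 : ℕ) then 1 else 0]
  simp only [Finset.card_filter]
  rw [Finset.sum_comm]
  refine Finset.sum_congr rfl fun a _ => ?_
  have h1 := hc a
  rcases hca : c a with ⟨t', k'⟩
  rw [hca] at h1
  simp only at h1
  by_cases ht : t' = t
  · subst ht
    simp [h1.symm, ite_and]
  · have : ¬ a.1.1 = t := by rw [← h1]; exact ht
    simp [this, ht]

/-- The weight is the sum of all corner counts, so it is monotone, and strictly so, in them. -/
lemma weight_eq (s : Pos T m n →₀ ℕ) :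
    weight s = ∑ t, ∑ x ∈ Finset.range m, ∑ y ∈ Finset.range n, corner s t x y := by
  have key : ∀ p : Pos T m n, ((p.2.1 : ℕ) + 1) * (p.2.2 + 1) =
      ∑ t, ∑ x ∈ Finset.range m, ∑ y ∈ Finset.range n,
        (if p.1 = t ∧ x ≤ (p.2.1 : ℕ) ∧ y ≤ (p.2.2 : ℕ) then 1 else 0) := by
    intro p
    have hx : (Finset.range m).filter (fun x => x ≤ (p.2.1 : ℕ)) = Finset.range (p.2.1 + 1) := by
      ext x; simp; omega
    have hy : (Finset.range n).filter (fun x => x ≤ (p.2.2 : ℕ)) = Finset.range (p.2.2 + 1) := by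
      ext x; simp; omega
    simp only [ite_and]
    simp [Finset.sum_ite, hx, hy]
  simp only [weight, corner, key, Finset.mul_sum]
  rw [Finset.sum_comm]
  refine Finset.sum_congr rfl fun t _ => ?_
  rw [Finset.sum_comm]
  refine Finset.sum_congr rfl fun x _ => ?_
  rw [Finset.sum_comm]

/-- The corner counts determine the exponent, by inclusion–exclusion. -/
lemma eq_of_corner_eq {s s' : Pos T m n →₀ ℕ}
    (h : ∀ t x y, corner s t x y = corner s' t x y) : s = s' := by
  have key : ∀ (s : Pos T m n →₀ ℕ) (p : Pos T m n),
      s p + corner s p.1 (p.2.1 + 1) p.2.2 + corner s p.1 p.2.1 (p.2.2 + 1) =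
        corner s p.1 p.2.1 p.2.2 + corner s p.1 (p.2.1 + 1) (p.2.2 + 1) := by
    intro s p
    have : s p = ∑ q, s q * (if q = p then 1 else 0) := by simp
    conv_lhs => enter [1, 1]; rw [this]
    simp only [corner, ← Finset.sum_add_distrib, ← mul_add]
    refine Finset.sum_congr rfl fun q _ => congrArg _ ?_
    obtain ⟨t, i, j⟩ := p
    obtain ⟨t', i', j'⟩ := q
    simp only [Prod.mk.injEq, Fin.ext_iff]
    split_ifs <;> grind
  ext p
  have h1 := key s p
  have h2 := key s' p
  simp only [h] at h1
  omega

/-- Within each colour, rows and columns are sorted alike: no two variables of the same colour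
form an antidiagonal chain. -/
def Sorted {s : Pos T m n →₀ ℕ} (c : Cell s → Colour r) : Prop :=
  ∀ a b, c a = c b → a.1.2.1 < b.1.2.1 → a.1.2.2 ≤ b.1.2.2

/-- Among the coloured monomials with given margins, the sorted one has the largest corner counts.
Indeed the variables of a given colour with row `≥ x` and those with column `≥ y` have prescribed
numbers, and in the sorted case one of these two sets contains the other. -/
lemma corner_le_of_margin_eq {s s' : Pos T m n →₀ ℕ} {c : Cell s → Colour r}
    {c' : Cell s' → Colour r} (hc : ∀ a, (c a).1 = a.1.1) (hc' : ∀ a, (c' a).1 = a.1.1)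
    (hsort : Sorted c) (hm : margin s' c' = margin s c) (t : T) (x y : ℕ) :
    corner s' t x y ≤ corner s t x y := by
  classical
  rw [corner_eq s c hc, corner_eq s' c' hc']
  refine Finset.sum_le_sum fun k _ => ?_
  have hrow : (Finset.univ.filter fun a : Cell s' => c' a = ⟨t, k⟩ ∧ x ≤ (a.1.2.1 : ℕ)).card =
      (Finset.univ.filter fun a : Cell s => c a = ⟨t, k⟩ ∧ x ≤ (a.1.2.1 : ℕ)).card := by
    have := congrArg (Finsupp.linearCombination ℕ (Sum.elim
      (fun q : Colour r × Fin m => if q.1 = ⟨t, k⟩ ∧ x ≤ (q.2 : ℕ) then 1 else 0)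
      (fun _ : Colour r × Fin n => 0))) hm
    simpa only [margin_pair, Sum.elim_inl, Sum.elim_inr, add_zero, ← Finset.card_filter] using this
  have hcol : (Finset.univ.filter fun a : Cell s' => c' a = ⟨t, k⟩ ∧ y ≤ (a.1.2.2 : ℕ)).card =
      (Finset.univ.filter fun a : Cell s => c a = ⟨t, k⟩ ∧ y ≤ (a.1.2.2 : ℕ)).card := by
    have := congrArg (Finsupp.linearCombination ℕ (Sum.elim
      (fun _ : Colour r × Fin m => 0)
      (fun q : Colour r × Fin n => if q.1 = ⟨t, k⟩ ∧ y ≤ (q.2 : ℕ) then 1 else 0))) hm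
    simpa only [margin_pair, Sum.elim_inl, Sum.elim_inr, zero_add, ← Finset.card_filter] using this
  have hnest : (∀ a : Cell s, c a = ⟨t, k⟩ → x ≤ (a.1.2.1 : ℕ) → y ≤ (a.1.2.2 : ℕ)) ∨
      (∀ a : Cell s, c a = ⟨t, k⟩ → y ≤ (a.1.2.2 : ℕ) → x ≤ (a.1.2.1 : ℕ)) := by
    by_contra! h
    obtain ⟨⟨a, ha, hax, hay⟩, b, hb, hby, hbx⟩ := h
    have := hsort b a (hb.trans ha.symm) (Fin.lt_def.2 (by omega))
    rw [Fin.le_def] at this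
    omega
  rcases hnest with h | h
  · calc _ ≤ _ := Finset.card_le_card (t := Finset.univ.filter fun a : Cell s' =>
          c' a = ⟨t, k⟩ ∧ x ≤ (a.1.2.1 : ℕ)) (by intro a; simp; tauto)
      _ = _ := hrow
      _ ≤ _ := Finset.card_le_card (by
        intro a; simp only [Finset.mem_filter, Finset.mem_univ, true_and]
        exact fun ha => ⟨ha.1, ha.2, h a ha.1 ha.2⟩)
  · calc _ ≤ _ := Finset.card_le_card (t := Finset.univ.filter fun a : Cell s' =>
          c' a = ⟨t, k⟩ ∧ y ≤ (a.1.2.2 : ℕ)) (by intro a; simp; tauto)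
      _ = _ := hcol
      _ ≤ _ := Finset.card_le_card (by
        intro a; simp only [Finset.mem_filter, Finset.mem_univ, true_and]
        exact fun ha => ⟨ha.1, h a ha.1 ha.2, ha.2⟩)

/-- A sorted coloured monomial is the unique one of largest weight among those with its margins. -/
lemma weight_le_of_margin_eq {s s' : Pos T m n →₀ ℕ} {c : Cell s → Colour r}
    {c' : Cell s' → Colour r} (hc : ∀ a, (c a).1 = a.1.1) (hc' : ∀ a, (c' a).1 = a.1.1)
    (hsort : Sorted c) (hm : margin s' c' = margin s c) :
    weight s' ≤ weight s ∧ (weight s ≤ weight s' → s' = s) := by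
  have hle := corner_le_of_margin_eq hc hc' hsort hm
  rw [weight_eq, weight_eq]
  refine ⟨Finset.sum_le_sum fun t _ => Finset.sum_le_sum fun x _ => Finset.sum_le_sum fun y _ =>
    hle t x y, fun hge => eq_of_corner_eq fun t x y => ?_⟩
  by_cases hx : x < m
  · by_cases hy : y < n
    · refine le_antisymm (hle t x y) ?_
      by_contra! hlt
      refine hge.not_gt ?_
      refine Finset.sum_lt_sum (fun t _ => Finset.sum_le_sum fun x _ => Finset.sum_le_sum
        fun y _ => hle t x y) ⟨t, Finset.mem_univ _, ?_⟩
      refine Finset.sum_lt_sum (fun x _ => Finset.sum_le_sum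
        fun y _ => hle t x y) ⟨x, Finset.mem_range.2 hx, ?_⟩
      exact Finset.sum_lt_sum (fun y _ => hle t x y) ⟨y, Finset.mem_range.2 hy, hlt⟩
    · have : ∀ p : Pos T m n, ¬ (y ≤ (p.2.2 : ℕ)) := fun p => by omega
      simp [corner, this]
  · have : ∀ p : Pos T m n, ¬ (x ≤ (p.2.1 : ℕ)) := fun p => by omega
    simp [corner, this]

/-- `Chain s ℓ p` says that an antidiagonal chain of `ℓ + 1` variables dividing `z^s`, all from the
same generic matrix, with strictly increasing rows and strictly decreasing columns, starts at `p`. -/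
def Chain (s : Pos T m n →₀ ℕ) : ℕ → Pos T m n → Prop
  | 0, p => s p ≠ 0
  | ℓ + 1, p => s p ≠ 0 ∧
      ∃ q, Chain s ℓ q ∧ q.1 = p.1 ∧ p.2.1 < q.2.1 ∧ q.2.2 < p.2.2

/-- No antidiagonal chain in the `t`-part of `z^s` has `r t + 1` elements. -/
def Good (r : T → ℕ) (s : Pos T m n →₀ ℕ) : Prop := ∀ p, ¬ Chain s (r p.1) p

/-- A good monomial is coloured in a sorted way by the length of the longest chain starting at
each variable. -/
lemma exists_sorted {s : Pos T m n →₀ ℕ} (hs : Good r s) :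
    ∃ c : Cell s → Colour r, (∀ a, (c a).1 = a.1.1) ∧ Sorted c := by
  classical
  have hpos : ∀ a : Cell s, Chain s 0 a.1 := fun a => by
    have := a.2.2
    simp only [Chain]; omega
  set len : Pos T m n → ℕ := fun p => Nat.findGreatest (fun ℓ => Chain s ℓ p) (r p.1) with hlen
  have hch : ∀ a : Cell s, Chain s (len a.1) a.1 := fun a =>
    Nat.findGreatest_spec (P := fun ℓ => Chain s ℓ a.1) (Nat.zero_le _) (hpos a)
  have hlt : ∀ a : Cell s, len a.1 < r a.1.1 := fun a => by
    refine lt_of_le_of_ne (Nat.findGreatest_le _) fun h => hs a.1 ?_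
    have := hch a
    rwa [h] at this
  refine ⟨fun a => ⟨a.1.1, ⟨len a.1, hlt a⟩⟩, fun _ => rfl, ?_⟩
  intro a b hab hi
  by_contra! hj
  have ht : a.1.1 = b.1.1 := congrArg Sigma.fst hab
  have hl : len a.1 = len b.1 := by
    have := congrArg (fun q : Colour r => (q.2 : ℕ)) hab
    simpa using this
  -- Otherwise a longest chain from `b` could be prolonged by `a`, which has the same colour.
  have hnext : Chain s (len b.1 + 1) a.1 := ⟨hpos a, b.1, hch b, ht.symm, hi, hj⟩
  have : len b.1 + 1 ≤ len a.1 :=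
    Nat.le_findGreatest (P := fun ℓ => Chain s ℓ a.1) (by rw [ht]; exact hlt b) hnext
  omega

lemma Chain.exists_anti {s : Pos T m n →₀ ℕ} {ℓ : ℕ} {p : Pos T m n} (h : Chain s ℓ p) :
    ∃ (ρ : Fin (ℓ + 1) → Fin m) (γ : Fin (ℓ + 1) → Fin n), StrictMono ρ ∧ StrictAnti γ ∧
      (∀ a, s (p.1, ρ a, γ a) ≠ 0) ∧ ρ 0 = p.2.1 ∧ γ 0 = p.2.2 := by
  induction ℓ generalizing p with
  | zero =>
    refine ⟨fun _ => p.2.1, fun _ => p.2.2, fun a b h => by omega, fun a b h => by omega,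
      fun a => h, rfl, rfl⟩
  | succ ℓ ih =>
    obtain ⟨hp, q, hq, ht, hi, hj⟩ := h
    obtain ⟨ρ, γ, hρ, hγ, hs, h0, h1⟩ := ih hq
    refine ⟨Matrix.vecCons p.2.1 ρ, Matrix.vecCons p.2.2 γ, hρ.vecCons (h0 ▸ hi),
      hγ.vecCons (h1 ▸ hj), ?_, rfl, rfl⟩
    intro a
    refine Fin.cases ?_ (fun a => ?_) a
    · exact hp
    · rw [← ht]; exact hs a

/-- The good monomials have linearly independent images under `Z_t ↦ U_t * V_t`. -/
lemma eq_zero_of_prodMap_eq_zero {f : MvPolynomial (Pos T m n) ℂ}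
    (hgood : ∀ s ∈ f.support, Good r s) (hf : prodMap r m n f = 0) : f = 0 := by
  classical
  by_contra hne
  -- Competitors of a sorted monomial are lighter, so the lightest good monomial has none.
  obtain ⟨s, hs, hmin⟩ := f.support.exists_min_image weight
    (Finset.nonempty_iff_ne_empty.2 (by simpa using hne))
  obtain ⟨c, hc, hsort⟩ := exists_sorted (hgood s hs)
  -- The coefficient at `margin s c` of the image of a monomial counts its colourings of that margin.
  have hexp : prodMap r m n f = ∑ s' ∈ f.support, f.coeff s' •
      ∑ c ∈ Fintype.piFinset fun a : Cell s' => {κ : Colour r | κ.1 = a.1.1},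
        monomial (margin s' c) (1 : ℂ) := by
    conv_lhs => rw [f.as_sum]
    rw [map_sum]
    refine Finset.sum_congr rfl fun s' _ => ?_
    rw [← prodMap_monomial, ← map_smul, smul_monomial, smul_eq_mul, mul_one]
  have h0 := congrArg (coeff (margin s c)) (hexp.symm.trans hf)
  rw [coeff_sum, Finset.sum_eq_single_of_mem s hs] at h0
  · rw [coeff_smul, coeff_sum, coeff_zero, smul_eq_mul, mul_eq_zero] at h0
    rcases h0 with h0 | h0
    · exact (mem_support_iff.1 hs) h0
    · simp only [coeff_monomial] at h0
      rw [Finset.sum_boole, Nat.cast_eq_zero, Finset.card_eq_zero] at h0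
      have : c ∈ ({x ∈ Fintype.piFinset fun a : Cell s =>
          ({κ : Colour r | κ.1 = a.1.1} : Finset _) | margin s x = margin s c} : Finset _) := by
        simp [hc]
      rw [h0] at this
      simp at this
  · intro s' hs' hss
    rw [coeff_smul, coeff_sum, Finset.sum_eq_zero, smul_zero]
    intro c' hc'
    rw [coeff_monomial, if_neg]
    intro hm
    have hc'' : ∀ a, (c' a).1 = a.1.1 := by simpa using hc'
    exact hss ((weight_le_of_margin_eq hc hc'' hsort hm).2 (hmin s' hs'))

/-! ### Rewriting modulo the minors -/

/-- The minor of the generic matrix `Z_t` with rows `ρ` and columns `γ`, in the given order. -/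
def minor {k : ℕ} (t : T) (ρ : Fin k → Fin m) (γ : Fin k → Fin n) : MvPolynomial (Pos T m n) ℂ :=
  (Matrix.of fun a b => (X (t, ρ a, γ b) : MvPolynomial (Pos T m n) ℂ)).det

/-- The ideal generated by the `(r t + 1)`-minors of `Z_t`, for all `t`. Repeated rows or columns
are allowed and give the zero polynomial. -/
def minorIdeal (r : T → ℕ) (m n : ℕ) : Ideal (MvPolynomial (Pos T m n) ℂ) :=
  Ideal.span {f | ∃ (t : T) (ρ : Fin (r t + 1) → Fin m) (γ : Fin (r t + 1) → Fin n),
    f = minor t ρ γ}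

/-- The exponent of the term of `minor t ρ γ` belonging to the permutation `π`. -/
def termExp {k : ℕ} (t : T) (ρ : Fin k → Fin m) (γ : Fin k → Fin n) (π : Equiv.Perm (Fin k)) :
    Pos T m n →₀ ℕ :=
  ∑ a, Finsupp.single (t, ρ a, γ (π a)) 1

lemma minor_eq {k : ℕ} (t : T) (ρ : Fin k → Fin m) (γ : Fin k → Fin n) :
    minor t ρ γ = ∑ π : Equiv.Perm (Fin k),
      (Equiv.Perm.sign π : ℤ) • monomial (termExp t ρ γ π) (1 : ℂ) := by
  rw [minor, ← Matrix.det_transpose, Matrix.det_apply]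
  refine Finset.sum_congr rfl fun π _ => ?_
  rw [termExp, monomial_sum_one]
  rfl

lemma weight_add (s s' : Pos T m n →₀ ℕ) : weight (s + s') = weight s + weight s' := by
  simp [weight, add_mul, Finset.sum_add_distrib]

lemma weight_single (p : Pos T m n) :
    weight (Finsupp.single p 1) = (p.2.1 + 1) * (p.2.2 + 1) := by
  classical
  simp [weight, Finsupp.single_apply]

lemma weight_termExp {k : ℕ} (t : T) (ρ : Fin k → Fin m) (γ : Fin k → Fin n)
    (π : Equiv.Perm (Fin k)) :
    weight (termExp t ρ γ π) = ∑ a, ((ρ a : ℕ) + 1) * (γ (π a) + 1) := by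
  have : ∀ s : Finset (Fin k), weight (∑ a ∈ s, Finsupp.single (t, ρ a, γ (π a)) 1) =
      ∑ a ∈ s, ((ρ a : ℕ) + 1) * (γ (π a) + 1) := by
    intro s
    induction s using Finset.cons_induction with
    | empty => simp [weight]
    | cons a s ha ih => rw [Finset.sum_cons, Finset.sum_cons, weight_add, ih, weight_single]
  exact this _

/-- With increasing rows and decreasing columns, the identity gives the antidiagonal term of the
minor, and this is the only term of least weight. -/
lemma weight_termExp_lt {k : ℕ} (t : T) {ρ : Fin k → Fin m} {γ : Fin k → Fin n}
    (hρ : StrictMono ρ) (hγ : StrictAnti γ) {π : Equiv.Perm (Fin k)} (hπ : π ≠ 1) :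
    weight (termExp t ρ γ 1) < weight (termExp t ρ γ π) := by
  rw [weight_termExp, weight_termExp]
  have hanti : Antivary (fun a => (ρ a : ℕ) + 1) (fun a => (γ a : ℕ) + 1) := by
    intro a b hab
    have : b < a := hγ.lt_iff_gt.1 (Fin.lt_def.2 (by simpa using hab))
    have := Fin.lt_def.1 (hρ this)
    simp only; omega
  refine (hanti.sum_mul_lt_sum_mul_comp_perm_iff (σ := π)).2 fun h => hπ ?_
  have hmono : StrictMono π := by
    refine Monotone.strictMono_of_injective (fun a b hab => ?_) π.injective
    by_contra! hlt
    have h1 := h (i := a) (j := b) (by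
      have := Fin.lt_def.1 (hγ hlt); simp only [Function.comp]; omega)
    have h2 : b ≤ a := hρ.le_iff_le.1 (Fin.le_def.2 (by simpa using h1))
    have : a = b := le_antisymm hab h2
    simp [this] at hlt
  ext a
  have := hmono.range_inj (g := id) strictMono_id
  simpa using congrArg Fin.val (congrFun (this.1 (by simp)) a)

lemma degree_termExp {k : ℕ} (t : T) (ρ : Fin k → Fin m) (γ : Fin k → Fin n)
    (π : Equiv.Perm (Fin k)) : (termExp t ρ γ π).degree = k := by
  simp [termExp, map_sum]

/-- The weight is bounded in each degree. -/
lemma weight_le (s : Pos T m n →₀ ℕ) : weight s ≤ s.degree * (m * n) := by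
  rw [weight, Finsupp.degree_eq_sum, Finset.sum_mul]
  refine Finset.sum_le_sum fun p _ => Nat.mul_le_mul_left _ (Nat.mul_le_mul ?_ ?_) <;> omega

lemma termExp_le {s : Pos T m n →₀ ℕ} {k : ℕ} {t : T} {ρ : Fin k → Fin m} {γ : Fin k → Fin n}
    (hρ : StrictMono ρ) (h : ∀ a, s (t, ρ a, γ a) ≠ 0) : termExp t ρ γ 1 ≤ s := by
  classical
  intro p
  simp only [termExp, Finsupp.coe_finsetSum, Finset.sum_apply, Finsupp.single_apply,
    Equiv.Perm.one_apply]
  rw [Finset.sum_boole]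
  by_cases hp : s p = 0
  · rw [hp, Finset.filter_false_of_mem]
    · simp
    · rintro a - rfl
      exact h a hp
  · refine le_trans ?_ (Nat.one_le_iff_ne_zero.2 hp)
    simp only [Nat.cast_id]
    refine Finset.card_le_one.2 fun a ha b hb => hρ.injective ?_
    simp only [Finset.mem_filter, Finset.mem_univ, true_and] at ha hb
    have := ha.trans hb.symm
    simp at this
    exact this.1

/-- Good monomials span modulo the minors. The induction is on the gap between the weight and its
bound in the given degree; the terms of a minor all have the same degree. -/
lemma monomial_mem_sup (r : T → ℕ) (s : Pos T m n →₀ ℕ) :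
    monomial s (1 : ℂ) ∈ (minorIdeal r m n).restrictScalars ℂ ⊔
      restrictSupport ℂ {s : Pos T m n →₀ ℕ | Good r s} := by
  classical
  induction hN : s.degree * (m * n) - weight s using Nat.strong_induction_on generalizing s with
  | _ N ih =>
  by_cases hs : Good r s
  · refine Submodule.mem_sup_right ?_
    rw [mem_restrictSupport_iff]
    exact (Finset.coe_subset.2 support_monomial_subset).trans (by simpa using hs)
  · simp only [Good, not_forall, not_not] at hs
    obtain ⟨p, hp⟩ := hs
    obtain ⟨ρ, γ, hρ, hγ, hsupp, -⟩ := hp.exists_anti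
    obtain ⟨d, rfl⟩ := exists_add_of_le (termExp_le hρ hsupp)
    have hmem : monomial d (1 : ℂ) * minor p.1 ρ γ ∈ minorIdeal r m n :=
      Ideal.mul_mem_left _ _ (Ideal.subset_span ⟨p.1, ρ, γ, rfl⟩)
    rw [minor_eq, Finset.mul_sum, ← Finset.add_sum_erase _ _ (Finset.mem_univ 1)] at hmem
    simp only [mul_smul_comm, monomial_mul, mul_one, Equiv.Perm.sign_one, Units.val_one,
      one_smul] at hmem
    have hrest : ∑ π ∈ Finset.univ.erase (1 : Equiv.Perm (Fin (r p.1 + 1))),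
        (Equiv.Perm.sign π : ℤ) • monomial (d + termExp p.1 ρ γ π) (1 : ℂ) ∈
        (minorIdeal r m n).restrictScalars ℂ ⊔
          restrictSupport ℂ {s : Pos T m n →₀ ℕ | Good r s} := by
      refine Submodule.sum_mem _ fun π hπ => zsmul_mem (ih _ ?_ _ rfl) _
      have h1 := weight_termExp_lt p.1 hρ hγ (Finset.ne_of_mem_erase hπ)
      have h2 := weight_le (d + termExp p.1 ρ γ π)
      have h3 : (d + termExp p.1 ρ γ π).degree = (termExp p.1 ρ γ 1 + d).degree := by
        simp only [map_add, degree_termExp]; omega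
      rw [weight_add] at h2 hN
      rw [weight_add, ← hN]
      rw [h3] at h2 ⊢
      omega
    have := Submodule.sub_mem _ (Submodule.mem_sup_left
      (S := (minorIdeal r m n).restrictScalars ℂ) hmem) hrest
    rw [add_sub_cancel_right, add_comm] at this
    exact this

lemma exists_good_repr (r : T → ℕ) (f : MvPolynomial (Pos T m n) ℂ) :
    ∃ g ∈ minorIdeal r m n, ∃ h : MvPolynomial (Pos T m n) ℂ,
      (∀ s ∈ h.support, Good r s) ∧ g + h = f := by
  have : f ∈ (minorIdeal r m n).restrictScalars ℂ ⊔
      restrictSupport ℂ {s : Pos T m n →₀ ℕ | Good r s} := by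
    rw [f.as_sum]
    refine Submodule.sum_mem _ fun s _ => ?_
    have := Submodule.smul_mem _ (f.coeff s) (monomial_mem_sup r s)
    rwa [smul_monomial, smul_eq_mul, mul_one] at this
  obtain ⟨g, hg, h, hh, rfl⟩ := Submodule.mem_sup.1 this
  exact ⟨g, hg, h, fun s hs => (mem_restrictSupport_iff _).1 hh hs, rfl⟩

/-- The tuple of matrices `(u t * v t)_t`, as a point of the space with coordinates `Pos T m n`. -/
def realPoint {r : T → ℕ} (u : (t : T) → Matrix (Fin m) (Fin (r t)) ℝ)
    (v : (t : T) → Matrix (Fin (r t)) (Fin n) ℝ) (p : Pos T m n) : ℝ :=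
  (u p.1 * v p.1) p.2.1 p.2.2

/-- Real points suffice to test vanishing of the image, since `ℝ` is an infinite subset of `ℂ`. -/
lemma prodMap_eq_zero {f : MvPolynomial (Pos T m n) ℂ}
    (hf : ∀ (u : (t : T) → Matrix (Fin m) (Fin (r t)) ℝ)
      (v : (t : T) → Matrix (Fin (r t)) (Fin n) ℝ),
      eval (fun p => ((realPoint u v p : ℝ) : ℂ)) f = 0) : prodMap r m n f = 0 := by
  refine funext_set (fun _ => Set.range ((↑) : ℝ → ℂ))
    (fun _ => Set.infinite_range_of_injective Complex.ofReal_injective) fun x hx => ?_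
  choose w hw using fun i => hx i (Set.mem_univ i)
  obtain rfl : (fun i => (w i : ℂ)) = x := funext hw
  have := hf (fun t => Matrix.of fun i k => w (.inl (⟨t, k⟩, i)))
    (fun t => Matrix.of fun k j => w (.inr (⟨t, k⟩, j)))
  rw [map_zero, ← this, prodMap, ← bind₁, eval, eval, eval₂Hom_bind₁]
  congr 2
  funext p
  simp only [realPoint, Matrix.mul_apply, Matrix.of_apply, map_sum, map_mul, eval₂Hom_X']
  rw [Finset.sum_filter, Fintype.sum_sigma, Finset.sum_eq_single p.1]
  · simp
  · intro t _ ht; simp [ht]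
  · simp

/-- A polynomial that vanishes at all real points `(u t * v t)_t` lies in the ideal of minors,
provided that this ideal vanishes there too. -/
theorem mem_minorIdeal {f : MvPolynomial (Pos T m n) ℂ}
    (hI : ∀ g ∈ minorIdeal r m n, ∀ (u : (t : T) → Matrix (Fin m) (Fin (r t)) ℝ)
      (v : (t : T) → Matrix (Fin (r t)) (Fin n) ℝ),
      eval (fun p => ((realPoint u v p : ℝ) : ℂ)) g = 0)
    (hf : ∀ (u : (t : T) → Matrix (Fin m) (Fin (r t)) ℝ)
      (v : (t : T) → Matrix (Fin (r t)) (Fin n) ℝ),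
      eval (fun p => ((realPoint u v p : ℝ) : ℂ)) f = 0) : f ∈ minorIdeal r m n := by
  obtain ⟨g, hg, h, hh, rfl⟩ := exists_good_repr r f
  have h0 : h = 0 := eq_zero_of_prodMap_eq_zero hh (prodMap_eq_zero fun u v => by
    have := hf u v
    rwa [map_add, hI g hg, zero_add] at this)
  rwa [h0, add_zero]

end

/-! ### The image of the network map -/

section Network

open Matrix

variable {n : ℕ → ℕ}

lemma det_submatrix_eq_zero {a b c r : ℕ} (P : Matrix (Fin a) (Fin c) ℝ)
    (Q : Matrix (Fin c) (Fin b) ℝ) (hP : P.rank ≤ r) (ρ : Fin (r + 1) → Fin a)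
    (γ : Fin (r + 1) → Fin b) : ((P * Q).submatrix ρ γ).det = 0 := by
  by_contra hne
  have h1 : ((P * Q).submatrix ρ γ).rank = r + 1 := by
    rw [rank_of_isUnit _ ((isUnit_iff_isUnit_det _).2 (isUnit_iff_ne_zero.2 hne))]
    simp
  have h2 : (P * Q).submatrix ρ γ = (1 : Matrix (Fin a) (Fin a) ℝ).submatrix ρ id *
      (P * Q.submatrix id γ) := by
    ext i j
    simp [Matrix.mul_apply, Matrix.one_apply]
  have h3 : ((P * Q).submatrix ρ γ).rank ≤ P.rank := by
    rw [h2]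
    exact (rank_mul_le_right _ _).trans (rank_mul_le_left _ _)
  omega

/-- The mask of every hidden layer up to `k` is a factor of `preM n A W k`. -/
lemma preM_factor (A : (ℓ : ℕ) → Fin (n ℓ) → Bool)
    (W : (ℓ : ℕ) → Matrix (Fin (n (ℓ + 1))) (Fin (n ℓ)) ℝ) {ℓ k : ℕ} (hℓ : 1 ≤ ℓ) (hk : ℓ ≤ k) :
    ∃ (C : Matrix (Fin (n k)) (Fin (n ℓ)) ℝ) (B : Matrix (Fin (n ℓ)) (Fin (n 0)) ℝ),
      preM n A W k = C * maskMat n A ℓ * B := by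
  induction k, hk using Nat.le_induction with
  | base =>
    obtain ⟨l, rfl⟩ := Nat.exists_eq_add_of_le' hℓ
    exact ⟨1, W l * preM n A W l, by rw [Matrix.one_mul]; rfl⟩
  | succ k hk ih =>
    obtain ⟨C, B, h⟩ := ih
    exact ⟨maskMat n A (k + 1) * (W k * C), B, by simp only [preM, h, Matrix.mul_assoc]⟩

lemma maskedMatrix_factor (A : (ℓ : ℕ) → Fin (n ℓ) → Bool)
    (W : (ℓ : ℕ) → Matrix (Fin (n (ℓ + 1))) (Fin (n ℓ)) ℝ) {ℓ K : ℕ} (hℓ : 1 ≤ ℓ) (hk : ℓ ≤ K) :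
    ∃ (C : Matrix (Fin (n (K + 1))) (Fin (n ℓ)) ℝ) (B : Matrix (Fin (n ℓ)) (Fin (n 0)) ℝ),
      maskedMatrix n A W (K + 1) = C * maskMat n A ℓ * B := by
  obtain ⟨C, B, h⟩ := preM_factor A W hℓ hk
  exact ⟨W K * C, B, by simp only [maskedMatrix, h, Matrix.mul_assoc]⟩

lemma rank_maskMat (A : (ℓ : ℕ) → Fin (n ℓ) → Bool) (ℓ : ℕ) :
    (maskMat n A ℓ).rank = activeCard n A ℓ := by
  rw [maskMat, Matrix.rank_diagonal, activeCard, Fintype.card_subtype]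
  congr 1
  ext i
  simp

lemma maskedMatrix_minor_eq_zero {K r : ℕ} {A : (ℓ : ℕ) → Fin (n ℓ) → Bool}
    (hr : r ∈ (fun ℓ => activeCard n A ℓ) '' Set.Icc 1 K)
    (W : (ℓ : ℕ) → Matrix (Fin (n (ℓ + 1))) (Fin (n ℓ)) ℝ)
    (ρ : Fin (r + 1) → Fin (n (K + 1))) (γ : Fin (r + 1) → Fin (n 0)) :
    ((maskedMatrix n A W (K + 1)).submatrix ρ γ).det = 0 := by
  obtain ⟨ℓ, ⟨h1, h2⟩, hr⟩ := hr
  obtain ⟨C, B, h⟩ := maskedMatrix_factor A W h1 h2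
  rw [h]
  refine det_submatrix_eq_zero _ _ ((rank_mul_le_right _ _).trans ?_) ρ γ
  rw [rank_maskMat]
  exact hr.le

lemma maskedMatrix_eq_zero {K : ℕ} {A : (ℓ : ℕ) → Fin (n ℓ) → Bool}
    (hr : 0 ∈ (fun ℓ => activeCard n A ℓ) '' Set.Icc 1 K)
    (W : (ℓ : ℕ) → Matrix (Fin (n (ℓ + 1))) (Fin (n ℓ)) ℝ) :
    maskedMatrix n A W (K + 1) = 0 := by
  ext i j
  simpa using maskedMatrix_minor_eq_zero hr W (fun _ => i) (fun _ => j)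

/-- Every tuple `(u t * v t)_t` is a tuple of masked matrices. The first layer applies `v t` and
spreads the result over `r t` chosen active units of the pattern `A t`, each further hidden layer
copies chosen units to chosen units, and the last layer applies `u t`. Disjointness of the chosen
units of different patterns prevents interference. -/
lemma exists_weights {T : Type} [Fintype T] [DecidableEq T] {K : ℕ} (hK : 1 ≤ K)
    (A : T → (ℓ : ℕ) → Fin (n ℓ) → Bool) (r : T → ℕ)
    (hr : ∀ t, IsLeast ((fun ℓ => activeCard n (A t) ℓ) '' Set.Icc 1 K) (r t))
    (hdis : ∀ s t, s ≠ t → 0 < r s → 0 < r t → ∀ ℓ, 1 ≤ ℓ → ℓ ≤ K → ∀ i,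
      A s ℓ i = true → A t ℓ i = true → False)
    (u : (t : T) → Matrix (Fin (n (K + 1))) (Fin (r t)) ℝ)
    (v : (t : T) → Matrix (Fin (r t)) (Fin (n 0)) ℝ) :
    ∃ W : (ℓ : ℕ) → Matrix (Fin (n (ℓ + 1))) (Fin (n ℓ)) ℝ,
      ∀ t, maskedMatrix n (A t) W (K + 1) = u t * v t := by
  -- `E t ℓ` embeds the inner space of dimension `r t` into layer `ℓ`; it is arbitrary outside the
  -- hidden layers.
  have hE : ∀ t ℓ, ∃ E : Matrix (Fin (n ℓ)) (Fin (r t)) ℝ, 1 ≤ ℓ → ℓ ≤ K →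
      ∃ e : Fin (r t) ↪ Fin (n ℓ), (∀ k, A t ℓ (e k) = true) ∧
        E = Matrix.of fun i k => if i = e k then 1 else 0 := by
    intro t ℓ
    by_cases h : 1 ≤ ℓ ∧ ℓ ≤ K
    · have hle : r t ≤ activeCard n (A t) ℓ := (hr t).2 ⟨ℓ, h, rfl⟩
      have : Nonempty (Fin (r t) ↪ {i : Fin (n ℓ) // A t ℓ i = true}) := by
        refine Function.Embedding.nonempty_of_card_le ?_
        rwa [Fintype.card_fin, Fintype.card_subtype]
      obtain ⟨e⟩ := this
      exact ⟨_, fun _ _ => ⟨e.trans (Function.Embedding.subtype _), fun k => (e k).2, rfl⟩⟩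
    · exact ⟨0, fun h1 h2 => absurd ⟨h1, h2⟩ h⟩
  choose E hE using hE
  have horth : ∀ t ℓ, 1 ≤ ℓ → ℓ ≤ K → (E t ℓ)ᵀ * E t ℓ = 1 := by
    intro t ℓ h1 h2
    obtain ⟨e, -, he⟩ := hE t ℓ h1 h2
    ext k k'
    simp [he, Matrix.mul_apply, Matrix.one_apply, eq_comm]
  have hcross : ∀ s t ℓ, s ≠ t → 1 ≤ ℓ → ℓ ≤ K → (E s ℓ)ᵀ * E t ℓ = 0 := by
    intro s t ℓ hst h1 h2
    obtain ⟨e, ha, he⟩ := hE t ℓ h1 h2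
    obtain ⟨e', ha', he'⟩ := hE s ℓ h1 h2
    ext k k'
    have hne : e k' ≠ e' k := fun h =>
      hdis s t hst k.pos k'.pos ℓ h1 h2 (e' k) (ha' k) (h ▸ ha k')
    simp [he, he', Matrix.mul_apply, hne]
  have hmask : ∀ t ℓ, 1 ≤ ℓ → ℓ ≤ K → maskMat n (A t) ℓ * E t ℓ = E t ℓ := by
    intro t ℓ h1 h2
    obtain ⟨e, ha, he⟩ := hE t ℓ h1 h2
    ext i k
    by_cases h : i = e k
    · simp [he, maskMat, h, ha]
    · simp [he, maskMat, h]
  have hmask0 : ∀ s t ℓ, s ≠ t → 0 < r t → 1 ≤ ℓ → ℓ ≤ K → maskMat n (A t) ℓ * E s ℓ = 0 := by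
    intro s t ℓ hst hrt h1 h2
    obtain ⟨e, ha, he⟩ := hE s ℓ h1 h2
    ext i k
    by_cases h : i = e k
    · have : ¬ (A t ℓ (e k) = true) := fun h' => hdis s t hst k.pos hrt ℓ h1 h2 _ (ha k) h'
      simp [he, maskMat, h, this]
    · simp [he, maskMat, h]
  -- Uniform notation for layer `ℓ`: `F t ℓ` writes into it and `G t ℓ` reads from it.
  let F : (t : T) → (ℓ : ℕ) → Matrix (Fin (n ℓ)) (Fin (r t)) ℝ :=
    fun t => Function.update (E t) (K + 1) (u t)
  let G : (t : T) → (ℓ : ℕ) → Matrix (Fin (r t)) (Fin (n ℓ)) ℝ :=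
    fun t => Function.update (fun ℓ => (E t ℓ)ᵀ) 0 (v t)
  have hF : ∀ t ℓ, ℓ ≤ K → F t ℓ = E t ℓ := fun t ℓ h => by
    simp only [F]; rw [Function.update_of_ne (by omega)]
  have hFK : ∀ t, F t (K + 1) = u t := fun t => Function.update_self ..
  have hG : ∀ t ℓ, 1 ≤ ℓ → G t ℓ = (E t ℓ)ᵀ := fun t ℓ h => by
    simp only [G]; rw [Function.update_of_ne (by omega)]
  have hG0 : ∀ t, G t 0 = v t := fun t => Function.update_self ..
  let W : (ℓ : ℕ) → Matrix (Fin (n (ℓ + 1))) (Fin (n ℓ)) ℝ := fun ℓ => ∑ s, F s (ℓ + 1) * G s ℓ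
  have hW : ∀ t ℓ, 1 ≤ ℓ → ℓ ≤ K → W ℓ * E t ℓ = F t (ℓ + 1) := by
    intro t ℓ h1 h2
    simp only [W, Matrix.sum_mul, Matrix.mul_assoc]
    rw [Finset.sum_eq_single t]
    · rw [hG t ℓ h1, horth t ℓ h1 h2, Matrix.mul_one]
    · intro s _ hst
      rw [hG s ℓ h1, hcross s t ℓ hst h1 h2, Matrix.mul_zero]
    · simp
  refine ⟨W, fun t => ?_⟩
  rcases Nat.eq_zero_or_pos (r t) with h0 | hpos
  · rw [maskedMatrix_eq_zero (h0 ▸ (hr t).1)]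
    have : IsEmpty (Fin (r t)) := by rw [h0]; infer_instance
    ext i j
    simp [Matrix.mul_apply]
  have hpre : ∀ ℓ, 1 ≤ ℓ → ℓ ≤ K → preM n (A t) W ℓ = E t ℓ * v t := by
    intro ℓ h1
    induction ℓ, h1 using Nat.le_induction with
    | base =>
      intro h2
      simp only [preM, Matrix.mul_one, W, Matrix.mul_sum]
      rw [Finset.sum_eq_single t]
      · rw [← Matrix.mul_assoc, hF t _ h2, hmask t _ le_rfl h2, hG0]
      · intro s _ hst
        rw [← Matrix.mul_assoc, hF s _ h2, hmask0 s t _ hst hpos le_rfl h2, Matrix.zero_mul]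
      · simp
    | succ ℓ h1 ih =>
      intro h2
      rw [preM, ih (by omega), ← Matrix.mul_assoc (W ℓ), hW t ℓ h1 (by omega), hF t _ h2,
        ← Matrix.mul_assoc, hmask t _ (by omega) h2]
  rw [maskedMatrix, hpre K hK le_rfl, ← Matrix.mul_assoc, hW t K hK le_rfl, hFK]

lemma eval_minor {T : Type} {a b k : ℕ} (y : Pos T a b → ℝ) (t : T) (ρ : Fin k → Fin a)
    (γ : Fin k → Fin b) :
    eval (fun p => (y p : ℂ)) (minor t ρ γ) =
      (((Matrix.of fun i j => y (t, i, j)).submatrix ρ γ).det : ℝ) := by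
  rw [minor, RingHom.map_det, ← Complex.ofRealHom_eq_coe, RingHom.map_det]
  congr 1
  ext i j
  simp

lemma eval_eq_zero_of_mem_minorIdeal {T : Type} {a b : ℕ} {r : T → ℕ} {y : Pos T a b → ℝ}
    (hy : ∀ t (ρ : Fin (r t + 1) → Fin a) (γ : Fin (r t + 1) → Fin b),
      ((Matrix.of fun i j => y (t, i, j)).submatrix ρ γ).det = 0)
    {f : MvPolynomial (Pos T a b) ℂ} (hf : f ∈ minorIdeal r a b) :
    eval (fun p => (y p : ℂ)) f = 0 := by
  have : minorIdeal r a b ≤ RingHom.ker (eval (fun p => (y p : ℂ))) := by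
    rw [minorIdeal, Ideal.span_le]
    rintro _ ⟨t, ρ, γ, rfl⟩
    simp [RingHom.mem_ker, eval_minor, hy]
  exact this hf

/-- If both patterns have an active path, every active unit of a hidden layer lies on one: reroute
the path through this unit in that layer. Hence the patterns share no active unit. -/
lemma disjoint_of_paths {K : ℕ} {A₁ A₂ : (ℓ : ℕ) → Fin (n ℓ) → Bool}
    (hdisj : ∀ p q : NPath n K, IsActivePath n A₁ p → IsActivePath n A₂ q →
      ∀ ℓ : Fin K, p ℓ ≠ q ℓ)
    {r₁ r₂ : ℕ} (h₁ : 0 < r₁) (h₂ : 0 < r₂)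
    (hr₁ : IsLeast ((fun ℓ => activeCard n A₁ ℓ) '' Set.Icc 1 K) r₁)
    (hr₂ : IsLeast ((fun ℓ => activeCard n A₂ ℓ) '' Set.Icc 1 K) r₂)
    {ℓ : ℕ} (hℓ : 1 ≤ ℓ) (hℓK : ℓ ≤ K) (i : Fin (n ℓ)) (hi₁ : A₁ ℓ i = true)
    (hi₂ : A₂ ℓ i = true) : False := by
  have key : ∀ {A : (ℓ : ℕ) → Fin (n ℓ) → Bool} {r : ℕ}, 0 < r →
      IsLeast ((fun ℓ => activeCard n A ℓ) '' Set.Icc 1 K) r →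
      ∃ p : NPath n K, IsActivePath n A p := by
    intro A r hr0 hr
    have : ∀ ℓ : Fin K, ∃ i, A (ℓ.1 + 1) i = true := by
      intro ℓ
      have hle : r ≤ activeCard n A (ℓ.1 + 1) := hr.2 ⟨ℓ.1 + 1, ⟨by omega, by omega⟩, rfl⟩
      obtain ⟨i, hi⟩ := Finset.card_pos.1 (hr0.trans_le hle)
      exact ⟨i, by simpa using hi⟩
    choose p hp using this
    exact ⟨p, hp⟩
  have upd : ∀ {A : (ℓ : ℕ) → Fin (n ℓ) → Bool} (p : NPath n K) (l : Fin K)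
      (i : Fin (n (l.1 + 1))), IsActivePath n A p → A (l.1 + 1) i = true →
      IsActivePath n A (Function.update p l i) := by
    intro A p l i hp hi l'
    by_cases h : l' = l
    · subst h; simpa using hi
    · rw [Function.update_of_ne h]; exact hp l'
  obtain ⟨p, hp⟩ := key h₁ hr₁
  obtain ⟨q, hq⟩ := key h₂ hr₂
  obtain ⟨l, rfl⟩ := Nat.exists_eq_add_of_le' hℓ
  refine hdisj _ _ (upd p ⟨l, hℓK⟩ i hp hi₁) (upd q ⟨l, hℓK⟩ i hq hi₂) ⟨l, hℓK⟩ ?_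
  simp

end Network

/-- If every `A_1`-active path and every `A_2`-active path are
disjoint (they never share a unit in any hidden layer), then the vanishing ideal of
`{(M_{A_1}(θ), M_{A_2}(θ)) : θ}` is the sum of the ideal of `(r_1+1)`-minors of the
generic matrix `Z_1` and the ideal of `(r_2+1)`-minors of the generic matrix `Z_2`,
where `r_i = min_{1 ≤ ℓ ≤ L-1} Σ_j (A_i)^ℓ_j` and `L = K + 1 ≥ 2`. -/
theorem statement9 (n : ℕ → ℕ) (K : ℕ) (hK : 1 ≤ K)
    (A₁ A₂ : (ℓ : ℕ) → Fin (n ℓ) → Bool)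
    (hdisj : ∀ p q : NPath n K, IsActivePath n A₁ p → IsActivePath n A₂ q →
      ∀ ℓ : Fin K, p ℓ ≠ q ℓ)
    (r₁ r₂ : ℕ)
    (hr₁ : IsLeast ((fun ℓ => activeCard n A₁ ℓ) '' Set.Icc 1 K) r₁)
    (hr₂ : IsLeast ((fun ℓ => activeCard n A₂ ℓ) '' Set.Icc 1 K) r₂) :
    vanishingIdeal {y : Fin 2 × Fin (n (K + 1)) × Fin (n 0) → ℝ |
        ∃ W : (ℓ : ℕ) → Matrix (Fin (n (ℓ + 1))) (Fin (n ℓ)) ℝ,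
          y = fun q =>
            ![maskedMatrix n A₁ W (K + 1), maskedMatrix n A₂ W (K + 1)] q.1 q.2.1 q.2.2} =
      Ideal.span {f : MvPolynomial (Fin 2 × Fin (n (K + 1)) × Fin (n 0)) ℂ |
          ∃ (ρ : Fin (r₁ + 1) → Fin (n (K + 1))) (γ : Fin (r₁ + 1) → Fin (n 0)),
            f = (Matrix.of fun a b =>
              (MvPolynomial.X (0, ρ a, γ b) :
                MvPolynomial (Fin 2 × Fin (n (K + 1)) × Fin (n 0)) ℂ)).det} +
      Ideal.span {f : MvPolynomial (Fin 2 × Fin (n (K + 1)) × Fin (n 0)) ℂ |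
          ∃ (ρ : Fin (r₂ + 1) → Fin (n (K + 1))) (γ : Fin (r₂ + 1) → Fin (n 0)),
            f = (Matrix.of fun a b =>
              (MvPolynomial.X (1, ρ a, γ b) :
                MvPolynomial (Fin 2 × Fin (n (K + 1)) × Fin (n 0)) ℂ)).det} := by
  have hr : ∀ t : Fin 2, IsLeast ((fun ℓ => activeCard n ((![A₁, A₂] : Fin 2 → _) t) ℓ) ''
      Set.Icc 1 K) ((![r₁, r₂] : Fin 2 → ℕ) t) := by
    intro t
    match t with
    | 0 => exact hr₁
    | 1 => exact hr₂
  have hsum : ∀ I₁ I₂ : Ideal (MvPolynomial (Fin 2 × Fin (n (K + 1)) × Fin (n 0)) ℂ),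
      I₁ = Ideal.span {f | ∃ (ρ : Fin (r₁ + 1) → Fin (n (K + 1))) (γ : Fin (r₁ + 1) → Fin (n 0)),
        f = minor 0 ρ γ} →
      I₂ = Ideal.span {f | ∃ (ρ : Fin (r₂ + 1) → Fin (n (K + 1))) (γ : Fin (r₂ + 1) → Fin (n 0)),
        f = minor 1 ρ γ} →
      I₁ + I₂ = minorIdeal ![r₁, r₂] (n (K + 1)) (n 0) := by
    rintro _ _ rfl rfl
    rw [Submodule.add_eq_sup, ← Ideal.span_union, minorIdeal]
    congr 1
    ext f
    constructor
    · rintro (⟨ρ, γ, rfl⟩ | ⟨ρ, γ, rfl⟩)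
      · exact ⟨0, ρ, γ, rfl⟩
      · exact ⟨1, ρ, γ, rfl⟩
    · rintro ⟨t, ρ, γ, rfl⟩
      match t, ρ, γ with
      | 0, ρ, γ => exact Or.inl ⟨ρ, γ, rfl⟩
      | 1, ρ, γ => exact Or.inr ⟨ρ, γ, rfl⟩
  refine Eq.trans ?_ (hsum _ _ rfl rfl).symm
  refine le_antisymm (fun f hf => ?_) (fun f hf => ?_)
  · refine mem_minorIdeal (fun g hg u v => ?_) (fun u v => ?_)
    · refine eval_eq_zero_of_mem_minorIdeal (fun t ρ γ => ?_) hg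
      refine det_submatrix_eq_zero (u t) (v t) ?_ ρ γ
      simpa using (u t).rank_le_width
    · have hdis : ∀ s t : Fin 2, s ≠ t → 0 < (![r₁, r₂] : Fin 2 → ℕ) s →
          0 < (![r₁, r₂] : Fin 2 → ℕ) t → ∀ ℓ, 1 ≤ ℓ → ℓ ≤ K → ∀ i,
          (![A₁, A₂] : Fin 2 → _) s ℓ i = true → (![A₁, A₂] : Fin 2 → _) t ℓ i = true → False := by
        intro s t hst hs ht ℓ h1 h2 i hi hi'
        match s, t with
        | 0, 0 => exact hst rfl
        | 1, 1 => exact hst rfl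
        | 0, 1 => exact disjoint_of_paths hdisj hs ht hr₁ hr₂ h1 h2 i hi hi'
        | 1, 0 => exact disjoint_of_paths hdisj ht hs hr₁ hr₂ h1 h2 i hi' hi
      obtain ⟨W, hW⟩ := exists_weights hK _ _ hr hdis u v
      refine hf (realPoint u v) ⟨W, ?_⟩
      funext ⟨t, i, j⟩
      rw [realPoint, ← hW t]
      match t with
      | 0 => rfl
      | 1 => rfl
  · rintro _ ⟨W, rfl⟩
    refine eval_eq_zero_of_mem_minorIdeal (fun t ρ γ => ?_) hf
    have := maskedMatrix_minor_eq_zero (hr t).1 W ρ γ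
    match t, ρ, γ with
    | 0, ρ, γ => exact this
    | 1, ρ, γ => exact this
end
end

section
/- Let A_1, …, A_k ∈ {0,1}^{n_1} be activation patterns, let B_i = {j ∈ [n_1] : (A_i)_j = 1}, and assume ∪_{i=1}^k B_i = [n_1]. For each nonempty subset I ⊆ [k], let C_I = (∩_{i∈I} B_i) ∖ (∪_{i∉I} B_i). If n_0 ≥ n_1 and n_1 ≤ n_2, then the vanishing ideal J ⊆ ℂ[z^{(i)}_{ab} : i ∈ [k], a ∈ [n_2], b ∈ [n_0]] of the image of θ ↦ (W^(2)·diag(A_1)·W^(1), …, W^(2)·diag(A_k)·W^(1)) satisfies: the Krull dimension of ℂ[z]/J equals n_1(n_0 + n_2) − Σ_{∅ ≠ I ⊆ [k]} |C_I|². -/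
/-!
Let `X` (`n₁ × n₀`) and `Y` (`n₂ × n₁`) have independent indeterminate entries, let `D_i` be the
0/1 mask of the `i`-th pattern and let `𝔽` be the subfield of `ℂ(X, Y)` generated over `ℂ` by the
entries of all the matrices `Y D_i X`.

A polynomial vanishing on `ℝ^N` is zero, so the vanishing ideal is the kernel of the substitution
`z^(i)_{ab} ↦ (Y D_i X)_{ab}` (`vanishingIdeal_eq_ker`). The quotient is therefore a finitely
generated domain with fraction field `𝔽`, and by Noether normalization its Krull dimension is the
transcendence degree of `𝔽` (`ringKrullDim_adjoin_of_trdeg`).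

Call two hidden neurons equivalent, `j ~ l`, if they are active in the same patterns. The classes
are the nonempty `C_I`, and because the patterns cover every neuron, `I = ∅` does not occur; so
`r = Σ |C_I|²` is the number of pairs `j ~ l` (`sum_exactSet_sq`). The claim becomes
`trdeg 𝔽 = n₁ n₀ + n₂ n₁ - r`.

*Upper bound* (`masked_mem_of_normalized`). Let `T` be the block part of the first `n₁` columns of
`X`: the entries `(j, l)` with `j ~ l`, and zero elsewhere. It is invertible and commutes with
every `D_i`, so `Y D_i X = (Y T) D_i (T⁻¹ X)`. In the normalized matrix `T⁻¹ X` the `r` entries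
`(j, l)` with `j ~ l` are those of the identity, hence constant, and `𝔽` lies in a field generated
by the remaining `n₂ n₁ + (n₁ n₀ - r)` entries.

*Lower bound* (`entries_mem_of_masked`). Adjoining the `r` entries of `T` to `𝔽` gives all of
`ℂ(X, Y)`. With `D = Σ_i D_i`, which is invertible since every neuron is covered, the vectors `f`
for which `Y D diag(f) X` has entries in `𝔽` form an algebra (`maskAlgebra`). It contains
`D⁻¹ D_i`, hence by Lagrange interpolation the indicator of every class `C`; consequently
`Y 1_C X` has entries in `𝔽`. These products for varying `C` assemble to `Y T`, which yields
`Y = (Y T) T⁻¹`, and then in the same way `X` is recovered from `Y`.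
-/

noncomputable section

/-- The diagonal 0/1 mask matrix of an activation pattern of the hidden layer. -/
def diagPat (n₁ : ℕ) (A : Fin n₁ → Bool) : Matrix (Fin n₁) (Fin n₁) ℝ :=
  Matrix.diagonal (fun j => if A j then (1 : ℝ) else 0)

/-- `C_I = (∩_{i∈I} B_i) ∖ (∪_{i∉I} B_i)`: the set of hidden neurons active exactly in
the blocks indexed by `I`, where `B_i = {j : (A_i)_j = 1}`. -/
def exactSet {n₁ k : ℕ} (A : Fin k → Fin n₁ → Bool) (I : Finset (Fin k)) :
    Finset (Fin n₁) :=
  Finset.univ.filter fun j => (∀ i ∈ I, A i j = true) ∧ ∀ i ∉ I, A i j = false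

/-! ### Krull dimension and transcendence degree -/

/-- Incomparability gives `≤`; lying over and going up give `≥`. -/
theorem ringKrullDim_eq_of_isIntegral' {R S : Type*} [CommRing R] [CommRing S] [Algebra R S]
    [Algebra.IsIntegral R S] [FaithfulSMul R S] : ringKrullDim S = ringKrullDim R := by
  apply le_antisymm
  · refine Order.krullDim_le_of_strictMono (PrimeSpectrum.comap (algebraMap R S)) ?_
    intro I J h
    exact Ideal.IsIntegral.comap_lt_comap (A := S) h
  · refine iSup_le fun l => ?_
    obtain ⟨P, hP, hl⟩ := Ideal.exists_ideal_over_prime_of_isIntegral (S := S) l.head.asIdeal ⊥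
      (by
        change RingHom.ker _ ≤ _
        rw [(RingHom.injective_iff_ker_eq_bot _).1 (FaithfulSMul.algebraMap_injective R S)]
        exact bot_le)
    obtain ⟨hP', hl⟩ := hl
    have : P.LiesOver l.head.asIdeal := ⟨hl.symm⟩
    obtain ⟨L, hL, -⟩ := Ideal.exists_ltSeries_of_hasGoingUp (S := S) l P
    rw [← hL]
    exact Order.LTSeries.length_le_krullDim L

open scoped IntermediateField.algebraAdjoinAdjoin in
/-- The Krull dimension of a finitely generated domain over a field is the transcendence degree of
its fraction field, by Noether normalization. -/
theorem ringKrullDim_adjoin_of_trdeg {k E : Type} [Field k] [Field E] [Algebra k E] {s : Set E}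
    (hs : s.Finite) {n : ℕ} (hn : Algebra.trdeg k (IntermediateField.adjoin k s) = n) :
    ringKrullDim (Algebra.adjoin k s) = n := by
  have : Algebra.FiniteType k (Algebra.adjoin k s) := by
    rw [← hs.coe_toFinset]
    exact .adjoin_of_finite (Finset.finite_toSet _)
  obtain ⟨m, g, hg, hi⟩ := exists_integral_inj_algHom_of_fg k (Algebra.adjoin k s)
  let A := MvPolynomial (Fin m) k
  let : Algebra A (Algebra.adjoin k s) := g.toRingHom.toAlgebra
  have : FaithfulSMul A (Algebra.adjoin k s) :=
    (faithfulSMul_iff_algebraMap_injective _ _).2 hg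
  have : Algebra.IsIntegral A (Algebra.adjoin k s) := ⟨hi⟩
  have : IsScalarTower k A (Algebra.adjoin k s) := .of_algebraMap_eq fun x => (g.commutes x).symm
  have e1 := trdeg_add_eq k A (A := Algebra.adjoin k s)
  have e2 := trdeg_add_eq k (Algebra.adjoin k s) (A := IntermediateField.adjoin k s)
  rw [trdeg_eq_zero (R := A), add_zero] at e1
  rw [trdeg_eq_zero (R := Algebra.adjoin k s), add_zero] at e2
  rw [← e2, ← e1, MvPolynomial.trdeg_of_isDomain] at hn
  have hm : m = n := by simpa using hn
  rw [ringKrullDim_eq_of_isIntegral' (R := A), MvPolynomial.ringKrullDim_of_isNoetherianRing,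
    ringKrullDim_eq_zero_of_field]
  simp [hm]

/-! ### Fields generated by masked products -/

theorem inv_mem_subfield {K n : Type*} [Field K] [Fintype n] [DecidableEq n] (F : Subfield K)
    {M : Matrix n n K} (hM : ∀ i j, M i j ∈ F) (i j : n) : M⁻¹ i j ∈ F := by
  let M' : Matrix n n F := fun i j => ⟨M i j, hM i j⟩
  have h : M = M'.map F.subtype := rfl
  have e : M⁻¹ = M'⁻¹.map F.subtype := by
    rw [Matrix.inv_def, Matrix.inv_def, h]
    have h1 : (M'.map F.subtype).det = F.subtype M'.det := (F.subtype.map_det M').symm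
    have h2 : (M'.map F.subtype).adjugate = M'.adjugate.map F.subtype :=
      (F.subtype.map_adjugate M').symm
    rw [h1, h2]
    ext i j
    simp
  rw [e]
  exact (M'⁻¹ i j).2

theorem mul_mem_subfield {K l m n : Type*} [Field K] [Fintype m] (F : Subfield K)
    {M : Matrix l m K} {N : Matrix m n K} (hM : ∀ i j, M i j ∈ F) (hN : ∀ i j, N i j ∈ F)
    (i : l) (j : n) : (M * N) i j ∈ F := by
  rw [Matrix.mul_apply]
  exact F.sum_mem fun x _ => F.mul_mem (hM _ _) (hN _ _)

/-- A subalgebra of `K^ι` containing a vector `f` with values in the base field also contains the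
indicators of the level sets of `f`, which are Lagrange interpolation polynomials in `f`. -/
theorem indicator_mem_subalgebra {F K ι : Type*} [Field F] [Field K] [Algebra F K] [Fintype ι]
    (R : Subalgebra F (ι → K)) {f : ι → F} (hf : (fun j => algebraMap F K (f j)) ∈ R) (c : F)
    [DecidableEq F] :
    (fun j => if f j = c then (1 : K) else 0) ∈ R := by
  have h : (fun j => if f j = c then (1 : K) else 0) =
      ∏ v ∈ (Finset.univ.image f).erase c,
        algebraMap F (ι → K) (c - v)⁻¹ * ((fun j => algebraMap F K (f j)) - algebraMap F _ v) := by
    funext j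
    rw [Finset.prod_apply]
    simp only [Pi.mul_apply, Pi.sub_apply, Pi.algebraMap_apply]
    split_ifs with hj
    · refine (Finset.prod_eq_one fun v hv => ?_).symm
      have : c - v ≠ 0 := sub_ne_zero.2 (Finset.ne_of_mem_erase hv).symm
      rw [hj, ← map_sub, ← map_mul, inv_mul_cancel₀ this, map_one]
    · refine (Finset.prod_eq_zero (i := f j) ?_ ?_).symm
      · exact Finset.mem_erase.2 ⟨hj, Finset.mem_image_of_mem _ (Finset.mem_univ _)⟩
      · simp
  rw [h]
  exact R.prod_mem fun v _ => R.mul_mem (R.algebraMap_mem _) (R.sub_mem hf (R.algebraMap_mem _))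

/-- The diagonal 0/1 matrix of an activation pattern; `diagPat` with arbitrary coefficients. -/
def mask (K : Type*) [Zero K] [One K] {n₁ : ℕ} (a : Fin n₁ → Bool) :
    Matrix (Fin n₁) (Fin n₁) K :=
  Matrix.diagonal fun j => if a j then 1 else 0

/-- The block part of a square matrix `Q` with respect to the patterns `A`: it keeps the entries
`(j, l)` for which the neurons `j` and `l` are active in exactly the same patterns, and replaces
the others by zero. -/
def blockPart {K : Type*} [Zero K] {n₁ k : ℕ} (A : Fin k → Fin n₁ → Bool)
    (Q : Matrix (Fin n₁) (Fin n₁) K) : Matrix (Fin n₁) (Fin n₁) K :=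
  fun j l => if ∀ i, A i j = A i l then Q j l else 0

/-- The algebra of those vectors `f` for which `Y diag(d f) X` has entries in the subfield `F`, given
that `Y diag(d) X` does. Here `u` and `v` select an invertible square submatrix `Q` of `X` and `P`
of `Y`. Closure under products holds because, with `M = P diag(d) Q`,
`Y diag(d f g) X = (Y diag(d f) Q) M⁻¹ (P diag(d g) X)`. -/
def maskAlgebra {K : Type*} [Field K] {n₀ n₁ n₂ : ℕ} (F : Subfield K)
    (X : Matrix (Fin n₁) (Fin n₀) K) (Y : Matrix (Fin n₂) (Fin n₁) K)
    (u : Fin n₁ → Fin n₀) (v : Fin n₁ → Fin n₂)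
    (hX : (X.submatrix id u).det ≠ 0) (hY : (Y.submatrix v id).det ≠ 0)
    (d : Fin n₁ → K) (hd : ∀ j, d j ≠ 0)
    (hM : ∀ a b, (Y * Matrix.diagonal d * X) a b ∈ F) : Subalgebra F (Fin n₁ → K) where
  carrier := {f | ∀ a b, (Y * Matrix.diagonal (d * f) * X) a b ∈ F}
  add_mem' := by
    intro f g hf hg a b
    have : (Y * Matrix.diagonal (d * (f + g)) * X) =
        Y * Matrix.diagonal (d * f) * X + Y * Matrix.diagonal (d * g) * X := by
      rw [← Matrix.add_mul, ← Matrix.mul_add, Matrix.diagonal_add, mul_add]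
      rfl
    rw [this]
    exact F.add_mem (hf a b) (hg a b)
  mul_mem' := by
    intro f g hf hg
    set P := Y.submatrix v id
    set Q := X.submatrix id u
    set M := P * Matrix.diagonal d * Q
    have hMF : ∀ a b, M a b ∈ F := fun a b => hM (v a) (u b)
    have hD : (Matrix.diagonal d).det ≠ 0 := by
      rw [Matrix.det_diagonal]
      exact Finset.prod_ne_zero_iff.2 fun j _ => hd j
    have h1 : ∀ a b, (Y * Matrix.diagonal (d * f) * Q) a b ∈ F := fun a b => hf a (u b)
    have h2 : ∀ a b, (P * Matrix.diagonal (d * g) * X) a b ∈ F := fun a b => hg (v a) b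
    have key : Y * Matrix.diagonal (d * (f * g)) * X =
        (Y * Matrix.diagonal (d * f) * Q) * M⁻¹ * (P * Matrix.diagonal (d * g) * X) := by
      have e1 : Matrix.diagonal (d * (f * g)) = Matrix.diagonal (d * f) *
          (Matrix.diagonal d)⁻¹ * Matrix.diagonal (d * g) := by
        have : Matrix.diagonal (d * f) = Matrix.diagonal f * Matrix.diagonal d := by
          rw [Matrix.diagonal_mul_diagonal, mul_comm]; rfl
        rw [this, Matrix.mul_assoc (Matrix.diagonal f),
          Matrix.mul_nonsing_inv _ (isUnit_iff_ne_zero.2 hD), Matrix.mul_one,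
          Matrix.diagonal_mul_diagonal]
        congr 1
        funext j
        simp only [Pi.mul_apply]
        ring
      have e2 : Q * M⁻¹ * P = (Matrix.diagonal d)⁻¹ := by
        simp only [M, Matrix.mul_inv_rev, Matrix.mul_assoc]
        rw [Matrix.nonsing_inv_mul _ (isUnit_iff_ne_zero.2 hY), Matrix.mul_one,
          Matrix.mul_nonsing_inv_cancel_left _ _ (isUnit_iff_ne_zero.2 hX)]
      rw [e1, ← e2]
      simp only [Matrix.mul_assoc]
    intro a b
    rw [key]
    exact mul_mem_subfield F (mul_mem_subfield F h1 (inv_mem_subfield F hMF)) h2 a b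
  algebraMap_mem' := by
    intro c a b
    have : Y * Matrix.diagonal (d * algebraMap F (Fin n₁ → K) c) * X =
        (c : K) • (Y * Matrix.diagonal d * X) := by
      rw [← Matrix.smul_mul, ← Matrix.mul_smul, ← Matrix.diagonal_smul]
      congr 3
      funext j
      exact mul_comm _ _
    rw [this]
    exact F.mul_mem c.2 (hM a b)

/-- A subfield containing the entries of every masked product `Y D_i X` and the entries of the block
part of an invertible square submatrix of `X` contains all entries of `X` and `Y`. -/
theorem entries_mem_of_masked {K : Type*} [Field K] [CharZero K] {n₀ n₁ n₂ k : ℕ}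
    (A : Fin k → Fin n₁ → Bool) (hcover : ∀ j : Fin n₁, ∃ i, A i j = true) (F : Subfield K)
    (X : Matrix (Fin n₁) (Fin n₀) K) (Y : Matrix (Fin n₂) (Fin n₁) K)
    (u : Fin n₁ → Fin n₀) (v : Fin n₁ → Fin n₂)
    (hX : (X.submatrix id u).det ≠ 0) (hY : (Y.submatrix v id).det ≠ 0)
    (hX' : (blockPart A (X.submatrix id u)).det ≠ 0)
    (hY' : (blockPart A (Y.submatrix v id)).det ≠ 0)
    (hM : ∀ i a b, (Y * mask K (A i) * X) a b ∈ F)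
    (hT : ∀ j l, (∀ i, A i j = A i l) → X j (u l) ∈ F) :
    (∀ j b, X j b ∈ F) ∧ ∀ a j, Y a j ∈ F := by
  classical
  -- `m j` is the number of patterns in which the neuron `j` is active, so `diag(d) = Σ_i D_i`.
  let m : Fin n₁ → ℕ := fun j => ∑ i, if A i j then 1 else 0
  have hm : ∀ j, m j ≠ 0 := by
    intro j hj
    obtain ⟨i, hi⟩ := hcover j
    have := (Finset.sum_eq_zero_iff.1 hj) i (Finset.mem_univ _)
    simp [hi] at this
  let d : Fin n₁ → K := fun j => m j
  have hd : ∀ j, d j ≠ 0 := fun j => Nat.cast_ne_zero.2 (hm j)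
  have hdM : ∀ a b, (Y * Matrix.diagonal d * X) a b ∈ F := by
    have : Y * Matrix.diagonal d * X = ∑ i, Y * mask K (A i) * X := by
      rw [← Matrix.sum_mul, ← Matrix.mul_sum]
      congr 2
      ext j l
      rw [Matrix.sum_apply]
      by_cases h : j = l
      · subst h; simp [mask, d, m]
      · simp [mask, h]
    intro a b
    rw [this, Matrix.sum_apply]
    exact F.sum_mem fun i _ => hM i a b
  let R := maskAlgebra F X Y u v hX hY d hd hdM
  have hR : ∀ f, f ∈ R ↔ ∀ a b, (Y * Matrix.diagonal (d * f) * X) a b ∈ F := fun _ => Iff.rfl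
  -- The vector of diagonal entries of `D⁻¹ D_i`.
  let f : Fin k → Fin n₁ → F := fun i j => if A i j then (m j : F)⁻¹ else 0
  have hf : ∀ i, (fun j => algebraMap F K (f i j)) ∈ R := by
    intro i
    rw [hR]
    convert hM i using 5
    unfold mask
    congr 1
    funext j
    by_cases h : A i j
    · simp only [Pi.mul_apply, f, h, if_true, d]
      rw [map_inv₀, map_natCast]
      exact mul_inv_cancel₀ (hd j)
    · simp [f, h]
  have hind : ∀ l, (fun j => if ∀ i, A i j = A i l then (1 : K) else 0) ∈ R := by
    intro l
    have : (fun j => if ∀ i, A i j = A i l then (1 : K) else 0) =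
        ∏ i, fun j => if f i j = f i l then (1 : K) else 0 := by
      funext j
      rw [Finset.prod_apply, Finset.prod_ite_zero]
      simp only [Finset.mem_univ, true_imp_iff, Finset.prod_const_one]
      refine if_congr ⟨fun h i => ?_, fun h i => ?_⟩ rfl rfl
      · simp only [f, h]
        have : m j = m l := by simp [m, h]
        rw [this]
      · have h := h i
        have hj : (m j : F) ≠ 0 := by
          intro h0; apply hd j; simpa [d] using congrArg (algebraMap F K) h0
        have hl : (m l : F) ≠ 0 := by
          intro h0; apply hd l; simpa [d] using congrArg (algebraMap F K) h0
        by_cases h1 : A i j <;> by_cases h2 : A i l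
        · rw [h1, h2]
        · simp only [f, h1, h2] at h
          exact (inv_ne_zero hj h).elim
        · simp only [f, h1, h2] at h
          exact (inv_ne_zero hl h.symm).elim
        · simp [h1, h2]
    rw [this]
    exact R.prod_mem fun i _ => indicator_mem_subalgebra R (hf i) _
  -- On the class of `l` the vector `d` has the constant value `m l`, which can be divided out.
  have hN : ∀ l a b, (∑ j, if ∀ i, A i j = A i l then Y a j * X j b else 0) ∈ F := by
    intro l a b
    have h := F.mul_mem (F.inv_mem (natCast_mem F (m l))) ((hR _).1 (hind l) a b)
    convert h using 1
    rw [Matrix.mul_apply, Finset.mul_sum]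
    refine Finset.sum_congr rfl fun j _ => ?_
    rw [Matrix.mul_diagonal]
    split_ifs with hj
    · have e : m j = m l := by simp [m, hj]
      have := hd l
      simp only [Pi.mul_apply, d, e, if_pos hj] at this ⊢
      field_simp
    · simp [hj]
  have hTF : ∀ j l, blockPart A (X.submatrix id u) j l ∈ F := by
    intro j l
    unfold blockPart
    split_ifs with h
    · exact hT j l h
    · exact F.zero_mem
  have hYF : ∀ a j, Y a j ∈ F := by
    have e : Y = Y * blockPart A (X.submatrix id u) * (blockPart A (X.submatrix id u))⁻¹ :=
      (Matrix.mul_nonsing_inv_cancel_right _ _ (isUnit_iff_ne_zero.2 hX')).symm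
    intro a j
    rw [e]
    refine mul_mem_subfield F (fun a l => ?_) (inv_mem_subfield F hTF) a j
    rw [Matrix.mul_apply]
    convert hN l a (u l) using 2 with j
    simp only [blockPart, Matrix.submatrix_apply, id]
    split_ifs <;> simp
  refine ⟨?_, hYF⟩
  have hSF : ∀ j l, blockPart A (Y.submatrix v id) j l ∈ F := by
    intro j l
    unfold blockPart
    split_ifs with h
    · exact hYF _ _
    · exact F.zero_mem
  have e : X = (blockPart A (Y.submatrix v id))⁻¹ * (blockPart A (Y.submatrix v id) * X) :=
    (Matrix.nonsing_inv_mul_cancel_left _ _ (isUnit_iff_ne_zero.2 hY')).symm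
  intro j b
  rw [e]
  refine mul_mem_subfield F (inv_mem_subfield F hSF) (fun l b => ?_) j b
  rw [Matrix.mul_apply]
  convert hN l (v l) b using 2 with j
  simp only [blockPart, Matrix.submatrix_apply, id]
  by_cases h : ∀ i, A i l = A i j
  · rw [if_pos h, if_pos fun i => (h i).symm]
  · rw [if_neg h, if_neg fun h' => h fun i => (h' i).symm, zero_mul]

/-- With `T` the block part of a square submatrix of `X`, a subfield containing the entries of `Y T`
and those entries of `T⁻¹ X` that are not forced to be `0` or `1` contains the entries of every
masked product `Y D_i X`. -/
theorem masked_mem_of_normalized {K : Type*} [Field K] {n₀ n₁ n₂ k : ℕ}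
    (A : Fin k → Fin n₁ → Bool) (F : Subfield K)
    (X : Matrix (Fin n₁) (Fin n₀) K) (Y : Matrix (Fin n₂) (Fin n₁) K)
    (u : Fin n₁ → Fin n₀) (hX' : (blockPart A (X.submatrix id u)).det ≠ 0)
    (hU : ∀ a j, (Y * blockPart A (X.submatrix id u)) a j ∈ F)
    (hV : ∀ j b, (¬ ∃ l, u l = b ∧ ∀ i, A i j = A i l) →
      ((blockPart A (X.submatrix id u))⁻¹ * X) j b ∈ F) :
    ∀ i a b, (Y * mask K (A i) * X) a b ∈ F := by
  set T := blockPart A (X.submatrix id u) with hTdef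
  have hu := isUnit_iff_ne_zero.2 hX'
  have hc : ∀ i, T * mask K (A i) = mask K (A i) * T := by
    intro i
    ext j l
    simp only [mask, Matrix.mul_diagonal, Matrix.diagonal_mul]
    simp only [hTdef, blockPart]
    split_ifs with h <;> simp_all
  have hc' : ∀ i, T⁻¹ * mask K (A i) = mask K (A i) * T⁻¹ := by
    intro i
    calc T⁻¹ * mask K (A i) = T⁻¹ * (mask K (A i) * T) * T⁻¹ := by
          rw [Matrix.mul_assoc, Matrix.mul_nonsing_inv_cancel_right _ _ hu]
      _ = mask K (A i) * T⁻¹ := by rw [← hc, Matrix.nonsing_inv_mul_cancel_left _ _ hu]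
  -- `T⁻¹` commutes with every mask, so it is again supported on pairs of equivalent neurons.
  have hTi : ∀ j l, (¬ ∀ i, A i j = A i l) → T⁻¹ j l = 0 := by
    intro j l h
    push Not at h
    obtain ⟨i, hi⟩ := h
    have := congrFun (congrFun (hc' i) j) l
    simp only [mask, Matrix.mul_diagonal, Matrix.diagonal_mul] at this
    by_cases h1 : A i j <;> by_cases h2 : A i l <;> simp_all
  have hVF : ∀ j b, (T⁻¹ * X) j b ∈ F := by
    intro j b
    by_cases h : ∃ l, u l = b ∧ ∀ i, A i j = A i l
    · obtain ⟨l, rfl, hl⟩ := h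
      have : (T⁻¹ * X) j (u l) = (T⁻¹ * T) j l := by
        rw [Matrix.mul_apply, Matrix.mul_apply]
        refine Finset.sum_congr rfl fun q _ => ?_
        by_cases hq : ∀ i, A i j = A i q
        · have : ∀ i, A i q = A i l := fun i => (hq i).symm.trans (hl i)
          simp [hTdef, blockPart, this]
        · rw [hTi j q hq, zero_mul, zero_mul]
      rw [this, Matrix.nonsing_inv_mul _ hu, Matrix.one_apply]
      split_ifs
      · exact F.one_mem
      · exact F.zero_mem
    · exact hV j b h
  intro i a b
  have e : Y * mask K (A i) * X = (Y * T) * mask K (A i) * (T⁻¹ * X) := by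
    rw [Matrix.mul_assoc Y T, hc i, ← Matrix.mul_assoc Y, Matrix.mul_assoc _ T,
      Matrix.mul_nonsing_inv_cancel_left _ _ hu]
  rw [e]
  refine mul_mem_subfield F (mul_mem_subfield F hU fun j l => ?_) hVF a b
  unfold mask
  rw [Matrix.diagonal_apply]
  split_ifs
  exacts [F.one_mem, F.zero_mem, F.zero_mem]

/-! ### Counting and genericity -/

/-- `Σ |C_I|²` counts the pairs of neurons that are active in exactly the same patterns. -/
theorem sum_exactSet_sq {n₁ k : ℕ} (A : Fin k → Fin n₁ → Bool)
    (hcover : ∀ j : Fin n₁, ∃ i, A i j = true) :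
    ∑ I ∈ Finset.univ.filter (fun I : Finset (Fin k) => I.Nonempty), (exactSet A I).card ^ 2 =
      Fintype.card {p : Fin n₁ × Fin n₁ // ∀ i, A i p.1 = A i p.2} := by
  classical
  let s : Fin n₁ → Finset (Fin k) := fun j => Finset.univ.filter fun i => A i j = true
  have hs : ∀ j l, s j = s l ↔ ∀ i, A i j = A i l := by
    intro j l
    simp only [s, Finset.ext_iff, Finset.mem_filter, Finset.mem_univ, true_and]
    exact forall_congr' fun i => Bool.eq_iff_iff.symm
  have hex : ∀ I, exactSet A I = Finset.univ.filter fun j => s j = I := by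
    intro I
    ext j
    simp only [exactSet, s, Finset.mem_filter, Finset.mem_univ, true_and, Finset.ext_iff]
    constructor
    · rintro ⟨h1, h2⟩ i
      refine ⟨fun h => ?_, h1 i⟩
      by_contra hi
      simp [h2 i hi] at h
    · intro h
      exact ⟨fun i hi => (h i).2 hi, fun i hi => by simpa using mt (h i).1 hi⟩
  rw [Fintype.card_subtype, Finset.card_eq_sum_card_fiberwise (f := fun p => s p.1)
    (t := Finset.univ.filter (fun I : Finset (Fin k) => I.Nonempty))]
  · refine Finset.sum_congr rfl fun I _ => ?_
    rw [hex, sq, ← Finset.card_product]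
    congr 1
    ext p
    simp only [Finset.mem_product, Finset.mem_filter, Finset.mem_univ, true_and, ← hs]
    constructor
    · rintro ⟨h1, h2⟩; exact ⟨h1.trans h2.symm, h1⟩
    · rintro ⟨h1, h2⟩; exact ⟨h2, h1.symm.trans h2⟩
  · intro p _
    obtain ⟨i, hi⟩ := hcover p.1
    simp only [Finset.coe_filter, Finset.mem_univ, true_and, Set.mem_ofPred_eq]
    exact ⟨i, by simp [s, hi]⟩

/-- The entries of an `n₁ × n₀` matrix split into those at positions `(j, u l)` with `j`, `l` active
in the same patterns, which become constant after normalization, and the free ones. -/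
theorem card_add_card_free {n₀ n₁ k : ℕ} (A : Fin k → Fin n₁ → Bool) (u : Fin n₁ → Fin n₀)
    (hu : Function.Injective u) :
    Fintype.card {p : Fin n₁ × Fin n₀ // ¬ ∃ l, u l = p.2 ∧ ∀ i, A i p.1 = A i l} +
      Fintype.card {p : Fin n₁ × Fin n₁ // ∀ i, A i p.1 = A i p.2} = n₁ * n₀ := by
  classical
  have h : Fintype.card {p : Fin n₁ × Fin n₁ // ∀ i, A i p.1 = A i p.2} =
      Fintype.card {p : Fin n₁ × Fin n₀ // ∃ l, u l = p.2 ∧ ∀ i, A i p.1 = A i l} := by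
    refine Fintype.card_of_bijective (f := fun p => ⟨(p.1.1, u p.1.2), p.1.2, rfl, p.2⟩) ⟨?_, ?_⟩
    · rintro ⟨⟨a, b⟩, h⟩ ⟨⟨c, d⟩, h'⟩ e
      simp only [Subtype.mk.injEq, Prod.mk.injEq] at e ⊢
      exact ⟨e.1, hu e.2⟩
    · rintro ⟨⟨a, b⟩, l, hb, hl⟩
      exact ⟨⟨(a, l), hl⟩, Subtype.ext (Prod.ext rfl hb)⟩
  rw [h, add_comm, Fintype.card_subtype_compl, Nat.add_sub_cancel' (Fintype.card_subtype_le _)]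
  simp

/-- A polynomial matrix that specializes to the identity is generically invertible. -/
theorem det_map_ne_zero_of_eval {σ n : Type} [Fintype n] [DecidableEq n]
    (B : Matrix n n (MvPolynomial σ ℂ)) (x : σ → ℂ)
    (h : B.map (MvPolynomial.eval x) = 1) :
    (B.map (algebraMap (MvPolynomial σ ℂ) (FractionRing (MvPolynomial σ ℂ)))).det ≠ 0 := by
  have e := (RingHom.map_det (algebraMap (MvPolynomial σ ℂ) (FractionRing (MvPolynomial σ ℂ))) B)
  rw [RingHom.mapMatrix_apply] at e
  rw [← e, Ne, FaithfulSMul.algebraMap_eq_zero_iff]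
  intro h0
  have := RingHom.map_det (MvPolynomial.eval x) B
  rw [RingHom.mapMatrix_apply, h, h0, map_zero, Matrix.det_one] at this
  exact zero_ne_one this

/-- Real points are Zariski dense in complex affine space. -/
theorem eq_zero_of_eval_real {σ : Type} (g : MvPolynomial σ ℂ)
    (h : ∀ x : σ → ℝ, MvPolynomial.eval (fun i => (x i : ℂ)) g = 0) : g = 0 := by
  refine MvPolynomial.funext_set (fun _ => Set.range ((↑) : ℝ → ℂ))
    (fun _ => Set.infinite_range_of_injective Complex.ofReal_injective) fun x hx => ?_
  choose y hy using fun i => hx i trivial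
  have : x = fun i => (y i : ℂ) := funext fun i => (hy i).symm
  rw [this, h, map_zero]

/-! ### Generic weight matrices -/

section Generic

variable {n₀ n₁ n₂ k : ℕ}

/-- Indices of the parameters of the network: entries of `W^(1)`, then entries of `W^(2)`. -/
abbrev ParamIdx (n₀ n₁ n₂ : ℕ) : Type := (Fin n₁ × Fin n₀) ⊕ (Fin n₂ × Fin n₁)

/-- The field of rational functions in the parameters. -/
abbrev ParamField (n₀ n₁ n₂ : ℕ) : Type := FractionRing (MvPolynomial (ParamIdx n₀ n₁ n₂) ℂ)

/-- The first weight matrix with indeterminate entries. -/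
def polyX (n₀ n₁ n₂ : ℕ) : Matrix (Fin n₁) (Fin n₀) (MvPolynomial (ParamIdx n₀ n₁ n₂) ℂ) :=
  fun j b => MvPolynomial.X (Sum.inl (j, b))

/-- The second weight matrix with indeterminate entries. -/
def polyY (n₀ n₁ n₂ : ℕ) : Matrix (Fin n₂) (Fin n₁) (MvPolynomial (ParamIdx n₀ n₁ n₂) ℂ) :=
  fun a j => MvPolynomial.X (Sum.inr (a, j))

/-- The first weight matrix, over the rational function field. -/
def genX (n₀ n₁ n₂ : ℕ) : Matrix (Fin n₁) (Fin n₀) (ParamField n₀ n₁ n₂) :=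
  (polyX n₀ n₁ n₂).map (algebraMap _ _)

/-- The second weight matrix, over the rational function field. -/
def genY (n₀ n₁ n₂ : ℕ) : Matrix (Fin n₂) (Fin n₁) (ParamField n₀ n₁ n₂) :=
  (polyY n₀ n₁ n₂).map (algebraMap _ _)

/-- The coordinates `(Y D_i X)_{ab}`, `q = (i, a, b)`, of the generic point of the image. -/
def genM (n₀ n₁ n₂ : ℕ) (A : Fin k → Fin n₁ → Bool) (q : Fin k × Fin n₂ × Fin n₀) :
    ParamField n₀ n₁ n₂ :=
  (genY n₀ n₁ n₂ * mask (ParamField n₀ n₁ n₂) (A q.1) * genX n₀ n₁ n₂) q.2.1 q.2.2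

theorem blockPart_map {R S : Type*} [CommRing R] [CommRing S] (f : R →+* S)
    (A : Fin k → Fin n₁ → Bool) (Q : Matrix (Fin n₁) (Fin n₁) R) :
    (blockPart A Q).map f = blockPart A (Q.map f) := by
  ext j l
  simp only [blockPart, Matrix.map_apply]
  split_ifs <;> simp

theorem blockPart_one {R : Type*} [CommRing R] (A : Fin k → Fin n₁ → Bool) :
    blockPart A (1 : Matrix (Fin n₁) (Fin n₁) R) = 1 := by
  ext j l
  by_cases h : j = l
  · subst h; simp [blockPart]
  · simp [blockPart, h]

theorem polyX_eval (u : Fin n₁ → Fin n₀) (hu : Function.Injective u) :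
    ((polyX n₀ n₁ n₂).submatrix id u).map (MvPolynomial.eval
      (Sum.elim (fun p => if u p.1 = p.2 then 1 else 0) 0)) = 1 := by
  ext j l
  simp [polyX, Matrix.one_apply, hu.eq_iff]

theorem polyY_eval (v : Fin n₁ → Fin n₂) (hv : Function.Injective v) :
    ((polyY n₀ n₁ n₂).submatrix v id).map (MvPolynomial.eval
      (Sum.elim 0 (fun p => if v p.2 = p.1 then 1 else 0))) = 1 := by
  ext j l
  simp [polyY, Matrix.one_apply, hv.eq_iff, eq_comm]

theorem genX_det (u : Fin n₁ → Fin n₀) (hu : Function.Injective u) :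
    ((genX n₀ n₁ n₂).submatrix id u).det ≠ 0 :=
  det_map_ne_zero_of_eval _ _ (polyX_eval u hu)

theorem genY_det (v : Fin n₁ → Fin n₂) (hv : Function.Injective v) :
    ((genY n₀ n₁ n₂).submatrix v id).det ≠ 0 :=
  det_map_ne_zero_of_eval _ _ (polyY_eval v hv)

theorem genX_block_det (A : Fin k → Fin n₁ → Bool) (u : Fin n₁ → Fin n₀)
    (hu : Function.Injective u) :
    (blockPart A ((genX n₀ n₁ n₂).submatrix id u)).det ≠ 0 := by
  have := det_map_ne_zero_of_eval (blockPart A ((polyX n₀ n₁ n₂).submatrix id u)) _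
    (by rw [blockPart_map, polyX_eval u hu, blockPart_one])
  rwa [blockPart_map] at this

theorem genY_block_det (A : Fin k → Fin n₁ → Bool) (v : Fin n₁ → Fin n₂)
    (hv : Function.Injective v) :
    (blockPart A ((genY n₀ n₁ n₂).submatrix v id)).det ≠ 0 := by
  have := det_map_ne_zero_of_eval (blockPart A ((polyY n₀ n₁ n₂).submatrix v id)) _
    (by rw [blockPart_map, polyY_eval v hv, blockPart_one])
  rwa [blockPart_map] at this

theorem subfield_eq_top (F : Subfield (ParamField n₀ n₁ n₂))
    (hC : ∀ c : ℂ, algebraMap ℂ (ParamField n₀ n₁ n₂) c ∈ F)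
    (hX : ∀ j b, genX n₀ n₁ n₂ j b ∈ F) (hY : ∀ a j, genY n₀ n₁ n₂ a j ∈ F) (x) : x ∈ F := by
  have h : ∀ p : MvPolynomial (ParamIdx n₀ n₁ n₂) ℂ,
      algebraMap _ (ParamField n₀ n₁ n₂) p ∈ F := by
    intro p
    induction p using MvPolynomial.induction_on with
    | C c =>
      have := hC c
      rwa [IsScalarTower.algebraMap_apply ℂ (MvPolynomial (ParamIdx n₀ n₁ n₂) ℂ)] at this
    | add p q hp hq => rw [map_add]; exact F.add_mem hp hq
    | mul_X p i hp =>
      rw [map_mul]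
      refine F.mul_mem hp ?_
      rcases i with ⟨j, b⟩ | ⟨a, j⟩
      exacts [hX j b, hY a j]
  obtain ⟨p, q, -, rfl⟩ :=
    IsFractionRing.div_surjective (A := MvPolynomial (ParamIdx n₀ n₁ n₂) ℂ) x
  exact F.div_mem (h p) (h q)

theorem trdeg_paramField :
    Algebra.trdeg ℂ (ParamField n₀ n₁ n₂) = ((n₁ * n₀ + n₂ * n₁ : ℕ) : Cardinal) := by
  have e := trdeg_add_eq ℂ (MvPolynomial (ParamIdx n₀ n₁ n₂) ℂ) (A := ParamField n₀ n₁ n₂)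
  have : Algebra.IsAlgebraic (MvPolynomial (ParamIdx n₀ n₁ n₂) ℂ) (ParamField n₀ n₁ n₂) :=
    IsLocalization.isAlgebraic _ (nonZeroDivisors _)
  rw [trdeg_eq_zero (R := MvPolynomial (ParamIdx n₀ n₁ n₂) ℂ), add_zero,
    MvPolynomial.trdeg_of_isDomain] at e
  rw [← e]
  simp

open scoped IntermediateField.algebraAdjoinAdjoin in
theorem trdeg_adjoin_le {k E ι : Type} [Field k] [Field E] [Algebra k E] [Fintype ι]
    (g : ι → E) : Algebra.trdeg k (IntermediateField.adjoin k (Set.range g)) ≤ Fintype.card ι := by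
  have e := trdeg_add_eq k (Algebra.adjoin k (Set.range g))
    (A := IntermediateField.adjoin k (Set.range g))
  rw [trdeg_eq_zero (R := Algebra.adjoin k (Set.range g)), add_zero] at e
  rw [← e, Algebra.adjoin_range_eq_range_aeval]
  refine (trdeg_le_of_surjective (MvPolynomial.aeval g : MvPolynomial ι k →ₐ[k] E).rangeRestrict
    (AlgHom.rangeRestrict_surjective _)).trans ?_
  simp

/-! ### Transcendence degree of the generic point, and the vanishing ideal -/

theorem trdeg_genM (A : Fin k → Fin n₁ → Bool) (hcover : ∀ j : Fin n₁, ∃ i, A i j = true)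
    (h₀ : n₁ ≤ n₀) (h₂ : n₁ ≤ n₂) :
    Algebra.trdeg ℂ (IntermediateField.adjoin ℂ (Set.range (genM n₀ n₁ n₂ A))) =
      ((n₁ * (n₀ + n₂) -
        ∑ I ∈ Finset.univ.filter (fun I : Finset (Fin k) => I.Nonempty),
          (exactSet A I).card ^ 2 : ℕ) : Cardinal) := by
  classical
  let K := ParamField n₀ n₁ n₂
  let u : Fin n₁ → Fin n₀ := Fin.castLE h₀
  let v : Fin n₁ → Fin n₂ := Fin.castLE h₂
  have hu : Function.Injective u := Fin.castLE_injective h₀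
  have hv : Function.Injective v := Fin.castLE_injective h₂
  set F := IntermediateField.adjoin ℂ (Set.range (genM n₀ n₁ n₂ A)) with hF
  set r := Fintype.card {p : Fin n₁ × Fin n₁ // ∀ i, A i p.1 = A i p.2} with hr
  rw [sum_exactSet_sq A hcover, ← hr]
  have hcard := card_add_card_free A u hu
  rw [← hr] at hcard
  set c := Fintype.card {p : Fin n₁ × Fin n₀ // ¬ ∃ l, u l = p.2 ∧ ∀ i, A i p.1 = A i l} with hc
  have : FaithfulSMul ℂ F :=
    (faithfulSMul_iff_algebraMap_injective ℂ F).2 (algebraMap ℂ F).injective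
  have hmem : ∀ i a b, (genY n₀ n₁ n₂ * mask K (A i) * genX n₀ n₁ n₂) a b ∈ F := fun i a b =>
    IntermediateField.subset_adjoin ℂ _ ⟨(i, a, b), rfl⟩
  have upper : Algebra.trdeg ℂ F ≤ ((n₂ * n₁ + c : ℕ) : Cardinal) := by
    let T := blockPart A ((genX n₀ n₁ n₂).submatrix id u)
    let g : (Fin n₂ × Fin n₁) ⊕
        {p : Fin n₁ × Fin n₀ // ¬ ∃ l, u l = p.2 ∧ ∀ i, A i p.1 = A i l} → K :=
      Sum.elim (fun p => (genY n₀ n₁ n₂ * T) p.1 p.2) fun p => (T⁻¹ * genX n₀ n₁ n₂) p.1.1 p.1.2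
    let L := IntermediateField.adjoin ℂ (Set.range g)
    have hFL : F ≤ L := by
      rw [hF, IntermediateField.adjoin_le_iff]
      rintro _ ⟨⟨i, a, b⟩, rfl⟩
      exact masked_mem_of_normalized A L.toSubfield (genX n₀ n₁ n₂) (genY n₀ n₁ n₂) u
        (genX_block_det A u hu)
        (fun a j => IntermediateField.subset_adjoin ℂ _ ⟨Sum.inl (a, j), rfl⟩)
        (fun j b h => IntermediateField.subset_adjoin ℂ _ ⟨Sum.inr ⟨(j, b), h⟩, rfl⟩) i a b
    refine (trdeg_le_of_injective (IntermediateField.inclusion hFL)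
      (IntermediateField.inclusion_injective hFL)).trans ((trdeg_adjoin_le g).trans ?_)
    simp [hc]
  have lower : ((n₁ * n₀ + n₂ * n₁ : ℕ) : Cardinal) ≤ Algebra.trdeg ℂ F + r := by
    rw [← trdeg_paramField, ← trdeg_add_eq ℂ F (A := K)]
    gcongr
    let g : {p : Fin n₁ × Fin n₁ // ∀ i, A i p.1 = A i p.2} → K :=
      fun p => genX n₀ n₁ n₂ p.1.1 (u p.1.2)
    let L := IntermediateField.adjoin F (Set.range g)
    have hFL : ∀ x ∈ F, x ∈ L := fun x hx => L.algebraMap_mem (⟨x, hx⟩ : F)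
    have hXY := entries_mem_of_masked A hcover L.toSubfield (genX n₀ n₁ n₂) (genY n₀ n₁ n₂) u v
      (genX_det u hu) (genY_det v hv) (genX_block_det A u hu) (genY_block_det A v hv)
      (fun i a b => hFL _ (hmem i a b))
      (fun j l h => IntermediateField.subset_adjoin F _ ⟨⟨(j, l), h⟩, rfl⟩)
    have htop := subfield_eq_top L.toSubfield (fun z => hFL _ (F.algebraMap_mem z)) hXY.1 hXY.2
    have hL : L = ⊤ := eq_top_iff.2 fun x _ => htop x
    have h := trdeg_adjoin_le (k := F) g
    change Algebra.trdeg F L ≤ _ at h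
    rw [hL, IntermediateField.topEquiv.trdeg_eq] at h
    exact h
  obtain ⟨t, ht⟩ := Cardinal.lt_aleph0.1 (upper.trans_lt (Cardinal.natCast_lt_aleph0))
  rw [ht] at upper lower ⊢
  have upper : t ≤ n₂ * n₁ + c := by exact_mod_cast upper
  have lower : n₁ * n₀ + n₂ * n₁ ≤ t + r := by exact_mod_cast lower
  congr 1
  rw [Nat.mul_add, Nat.mul_comm n₁ n₂]
  omega

theorem genM_eq (A : Fin k → Fin n₁ → Bool) (q : Fin k × Fin n₂ × Fin n₀) :
    genM n₀ n₁ n₂ A q = algebraMap _ (ParamField n₀ n₁ n₂)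
      ((polyY n₀ n₁ n₂ * mask (MvPolynomial (ParamIdx n₀ n₁ n₂) ℂ) (A q.1) * polyX n₀ n₁ n₂) q.2.1 q.2.2) := by
  have h : (mask (MvPolynomial (ParamIdx n₀ n₁ n₂) ℂ) (A q.1)).map
      (algebraMap _ (ParamField n₀ n₁ n₂)) = mask (ParamField n₀ n₁ n₂) (A q.1) := by
    unfold mask
    rw [Matrix.diagonal_map (map_zero _)]
    congr 1
    funext j
    change algebraMap _ _ (if _ then _ else _) = _
    split_ifs <;> simp
  rw [genM, genX, genY, ← h, ← Matrix.map_mul, ← Matrix.map_mul, Matrix.map_apply]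

/-- By Zariski density of real parameters, the vanishing ideal of the image is the kernel of the
substitution of the generic point. -/
theorem vanishingIdeal_eq_ker (A : Fin k → Fin n₁ → Bool) :
    vanishingIdeal {y : Fin k × Fin n₂ × Fin n₀ → ℝ |
          ∃ (W₁ : Matrix (Fin n₁) (Fin n₀) ℝ) (W₂ : Matrix (Fin n₂) (Fin n₁) ℝ),
            y = fun q => (W₂ * diagPat n₁ (A q.1) * W₁) q.2.1 q.2.2} =
      RingHom.ker (MvPolynomial.aeval (genM n₀ n₁ n₂ A) :
        MvPolynomial (Fin k × Fin n₂ × Fin n₀) ℂ →ₐ[ℂ] ParamField n₀ n₁ n₂) := by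
  let m : Fin k × Fin n₂ × Fin n₀ → MvPolynomial (ParamIdx n₀ n₁ n₂) ℂ := fun q =>
    (polyY n₀ n₁ n₂ * mask (MvPolynomial (ParamIdx n₀ n₁ n₂) ℂ) (A q.1) * polyX n₀ n₁ n₂) q.2.1 q.2.2
  have h1 : ∀ f : MvPolynomial (Fin k × Fin n₂ × Fin n₀) ℂ,
      MvPolynomial.aeval (genM n₀ n₁ n₂ A) f =
        algebraMap _ (ParamField n₀ n₁ n₂) (MvPolynomial.aeval m f) := by
    intro f
    rw [← MvPolynomial.aeval_algebraMap_apply]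
    congr 2
    funext q
    exact genM_eq A q
  have h2 : ∀ (f : MvPolynomial (Fin k × Fin n₂ × Fin n₀) ℂ)
      (W₁ : Matrix (Fin n₁) (Fin n₀) ℝ) (W₂ : Matrix (Fin n₂) (Fin n₁) ℝ),
      MvPolynomial.eval (fun i => ((Sum.elim (fun p => W₁ p.1 p.2) (fun p => W₂ p.1 p.2) i : ℝ) : ℂ))
        (MvPolynomial.aeval m f) =
      MvPolynomial.eval (fun q => (((W₂ * diagPat n₁ (A q.1) * W₁) q.2.1 q.2.2 : ℝ) : ℂ)) f := by
    intro f W₁ W₂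
    induction f using MvPolynomial.induction_on with
    | C c => simp
    | add p q hp hq => simp only [map_add, hp, hq]
    | mul_X p q hp =>
      simp only [map_mul, hp, MvPolynomial.aeval_X, MvPolynomial.eval_X]
      congr 1
      simp only [m, mask, diagPat]
      rw [Matrix.mul_apply, Matrix.mul_apply]
      simp only [Matrix.mul_diagonal, map_sum, map_mul,
        polyX, polyY, MvPolynomial.eval_X, Complex.ofReal_sum, Complex.ofReal_mul, Sum.elim_inl,
        Sum.elim_inr]
      refine Finset.sum_congr rfl fun j _ => ?_
      split_ifs <;> simp
  ext f
  rw [RingHom.mem_ker, h1, FaithfulSMul.algebraMap_eq_zero_iff]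
  constructor
  · intro hf
    refine eq_zero_of_eval_real _ fun x => ?_
    have := h2 f (fun j b => x (Sum.inl (j, b))) (fun a j => x (Sum.inr (a, j)))
    have hx : (Sum.elim (fun p => x (Sum.inl (p.1, p.2))) (fun p => x (Sum.inr (p.1, p.2))) :
      ParamIdx n₀ n₁ n₂ → ℝ) = x := by
      funext i; rcases i with i | i <;> rfl
    rw [hx] at this
    rw [this]
    exact hf _ ⟨_, _, rfl⟩
  · rintro hf _ ⟨W₁, W₂, rfl⟩
    rw [← h2, hf, map_zero]

end Generic

/-- For activation patterns `A_1, …, A_k` of a shallow ReLU network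
without biases with `∪_i B_i = [n_1]`, if `n_0 ≥ n_1` and `n_1 ≤ n_2`, then the
multi-block pattern variety has the expected dimension
`n_1(n_0 + n_2) − Σ_{∅ ≠ I ⊆ [k]} |C_I|²`. -/
theorem statement18 (n₀ n₁ n₂ k : ℕ) (A : Fin k → Fin n₁ → Bool)
    (hcover : ∀ j : Fin n₁, ∃ i, A i j = true)
    (h₀ : n₁ ≤ n₀) (h₂ : n₁ ≤ n₂) :
    ringKrullDim (MvPolynomial (Fin k × Fin n₂ × Fin n₀) ℂ ⧸
        vanishingIdeal {y : Fin k × Fin n₂ × Fin n₀ → ℝ |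
          ∃ (W₁ : Matrix (Fin n₁) (Fin n₀) ℝ) (W₂ : Matrix (Fin n₂) (Fin n₁) ℝ),
            y = fun q => (W₂ * diagPat n₁ (A q.1) * W₁) q.2.1 q.2.2}) =
      (n₁ * (n₀ + n₂) -
        ∑ I ∈ Finset.univ.filter (fun I : Finset (Fin k) => I.Nonempty),
          (exactSet A I).card ^ 2 : ℕ) := by
  rw [vanishingIdeal_eq_ker A,
    ringKrullDim_eq_of_ringEquiv (Ideal.quotientKerEquivRange _).toRingEquiv,
    ← Algebra.adjoin_range_eq_range_aeval]
  exact ringKrullDim_adjoin_of_trdeg (Set.finite_range _) (trdeg_genM A hcover h₀ h₂)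
end
end
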